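/- arXiv:1910.08771 — 4 statements merged into one kernel-verified Lean document; each statement's English description precedes it below -/
import Mathlib

section
/- Let Φ : ℝ^{n×n} → ℝ^m be a linear operator and X = (x_1, …, x_n) ∈ ℝ^{n×n} a matrix with support S = S₁ ∪ … ∪ S_n (S_j = supp(x_j)). If X is a minimizer of inf ‖Z‖₁ subject to Φ(Z) = Φ(X), then there exist λ₁, …, λ_n ≥ 0 with λ₁ + … + λ_n = 1 such that for every H = (h_1, …, h_n) ∈ ker Φ one has |Σ_{j=1}^n λ_j ⟨h_{j|S_j}, sgn(x_j)⟩| ≤ ‖H_{−S}‖₁. -/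
/-! Let `M = ‖X‖₁`. By minimality, for each `H ∈ ker Φ` some column of `X + H` has `l₁`-norm at
least `M`. The excesses `F_j(H) = |x_j + h_j|₁ - M` are convex in `H`, so separating `0` from the
open convex set `{y | ∃ H ∈ ker Φ, ∀ j, F_j(H) < y_j}` yields weights `λ` with
`∑ λ_j F_j(H) ≥ 0` on `ker Φ` (`exists_weights`). As `∑ λ_j |x_j|₁ ≤ M`, also
`∑ λ_j (|x_j + t h_j|₁ - |x_j|₁) ≥ 0`. For small `t > 0` the column norms are affine in `t`
(`eventually_colNorm1`), and dividing by `t` gives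
`0 ≤ ∑ λ_j (⟨h_{j|S_j}, sgn x_j⟩ + |(h_{-S})_j|₁)`, where the second terms average to at most
`‖H_{-S}‖₁`. Applying this to `H` and `-H` bounds the absolute value. -/

open scoped BigOperators
open scoped Classical

noncomputable section

/-- The l1 norm of the j-th column of X. -/
def colNorm1 {n : ℕ} (X : Matrix (Fin n) (Fin n) ℝ) (j : Fin n) : ℝ := ∑ i, |X i j|

/-- The matrix norm ‖X‖₁ := max_j |x_j|₁. -/
def mnorm1 {n : ℕ} (X : Matrix (Fin n) (Fin n) ℝ) : ℝ := ⨆ j, colNorm1 X j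

/-- Trace inner product on matrices. -/
def minner {n : ℕ} (A B : Matrix (Fin n) (Fin n) ℝ) : ℝ := ∑ i, ∑ j, A i j * B i j

/-- Euclidean norm on ℝ^m. -/
def vnorm2 {m : ℕ} (y : Fin m → ℝ) : ℝ := Real.sqrt (∑ k, (y k)^2)

/-- Frobenius norm. -/
def frob {n : ℕ} (X : Matrix (Fin n) (Fin n) ℝ) : ℝ := Real.sqrt (∑ i, ∑ j, (X i j)^2)

/-- H_S : the matrix agreeing with H on the sparsity pattern S and zero elsewhere. -/
def restrict {n : ℕ} (S : Fin n → Finset (Fin n)) (H : Matrix (Fin n) (Fin n) ℝ) :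
    Matrix (Fin n) (Fin n) ℝ := Matrix.of fun i j => if i ∈ S j then H i j else 0

/-- An s-sparsity pattern: S_j ⊆ rows, |S_j| ≤ s for every column j. -/
def SparsityPattern (n s : ℕ) (S : Fin n → Finset (Fin n)) : Prop := ∀ j, (S j).card ≤ s

/-- Σ_s^{n×n}: every column has at most s nonzero entries. -/
def ColSparse {n : ℕ} (s : ℕ) (X : Matrix (Fin n) (Fin n) ℝ) : Prop :=
  ∀ j, ((Finset.univ : Finset (Fin n)).filter fun i => X i j ≠ 0).card ≤ s

/-- l1-column-flat: all columns have the same l1-norm. -/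
def Flat {n : ℕ} (X : Matrix (Fin n) (Fin n) ℝ) : Prop :=
  ∀ j k, colNorm1 X j = colNorm1 X k

/-- A finite theorem of the alternative: if finitely many convex functions on a convex set are
never simultaneously negative, then some convex combination of them is nonnegative there. -/
lemma exists_weights {E : Type*} [AddCommGroup E] [Module ℝ E] {n : ℕ} (K : Set E)
    (hne : K.Nonempty) (hK : Convex ℝ K) (F : Fin n → E → ℝ) (hF : ∀ j, ConvexOn ℝ K (F j))
    (hpos : ∀ H ∈ K, ∃ j, 0 ≤ F j H) :
    ∃ lam : Fin n → ℝ, (∀ j, 0 ≤ lam j) ∧ (∑ j, lam j = 1) ∧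
      ∀ H ∈ K, 0 ≤ ∑ j, lam j * F j H := by
  set C : Set (Fin n → ℝ) := {y | ∃ H ∈ K, ∀ j, F j H < y j} with hC
  have hopen : IsOpen C := by
    have : C = ⋃ H ∈ K, ⋂ j, {y : Fin n → ℝ | F j H < y j} := by
      ext y; simp [hC]
    rw [this]
    refine isOpen_biUnion fun H _ => isOpen_iInter_of_finite fun j => ?_
    exact isOpen_lt continuous_const (continuous_apply j)
  have hconv : Convex ℝ C := by
    rintro y ⟨H, hH, hy⟩ z ⟨G, hG, hz⟩ a b ha hb hab
    refine ⟨a • H + b • G, hK hH hG ha hb hab, fun j => ?_⟩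
    refine ((hF j).2 hH hG ha hb hab).trans_lt ?_
    have h1 := hy j
    have h2 := hz j
    simp only [Pi.add_apply, Pi.smul_apply, smul_eq_mul]
    rcases ha.eq_or_lt with rfl | ha'
    · have : b = 1 := by linarith
      subst this; linarith
    · nlinarith
  have h0 : (0 : Fin n → ℝ) ∉ C := by
    rintro ⟨H, hH, h⟩
    obtain ⟨j, hj⟩ := hpos H hH
    exact absurd (h j) (not_lt.mpr hj)
  obtain ⟨f, hf⟩ := geometric_hahn_banach_point_open hconv hopen h0
  simp only [map_zero] at hf
  set a : Fin n → ℝ := fun j => f (Pi.single j 1) with ha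
  have hfa : ∀ y, f y = ∑ j, a j * y j := by
    intro y
    have := LinearMap.pi_apply_eq_sum_univ f.toLinearMap y
    simp only [ContinuousLinearMap.coe_coe, smul_eq_mul] at this
    rw [this]
    refine Finset.sum_congr rfl fun j _ => ?_
    rw [mul_comm, ha]
    congr 2
    ext i
    simp [Pi.single_apply, eq_comm]
  have hge : ∀ H ∈ K, ∀ u : Fin n → ℝ, (∀ j, 0 < u j) → 0 < (∑ j, a j * F j H) + f u := by
    intro H hH u hu
    have := hf (fun j => F j H + u j) ⟨H, hH, fun j => by linarith [hu j]⟩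
    rw [hfa] at this
    rw [hfa, ← Finset.sum_add_distrib]
    simpa [mul_add] using this
  obtain ⟨H₀, hH₀⟩ := hne
  have hnn : ∀ j, 0 ≤ a j := by
    intro j
    by_contra! hneg
    set c := (∑ j, a j * F j H₀) + f 1 with hc
    -- moving far along the `j`-th axis stays in the set but would make `f` negative
    have key : ∀ s : ℝ, 0 ≤ s → 0 < c + s * a j := by
      intro s hs
      have := hge H₀ hH₀ (1 + s • Pi.single j 1) (fun i => by
        by_cases h : i = j
        · subst h; simp; linarith
        · simp [h])
      rw [map_add, map_smul, smul_eq_mul] at this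
      linarith
    have hc0 := key 0 le_rfl
    have := key (c / (-a j)) (div_nonneg (by linarith) (by linarith))
    have h2 : c / (-a j) * a j = -c := by
      have : a j ≠ 0 := hneg.ne
      field_simp
    linarith
  have hnonneg : ∀ H ∈ K, 0 ≤ ∑ j, a j * F j H := by
    intro H hH
    by_contra! hneg
    set c := ∑ j, a j * F j H
    have hf1 : 0 ≤ f 1 := by
      rw [hfa]; exact Finset.sum_nonneg fun j _ => by simpa using hnn j
    have h1 : 0 < -c / (f 1 + 1) := div_pos (by linarith) (by linarith)
    have := hge H hH ((-c / (f 1 + 1)) • 1) (fun j => by simpa using h1)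
    rw [map_smul, smul_eq_mul] at this
    have h2 : -c / (f 1 + 1) * (f 1 + 1) = -c := div_mul_cancel₀ _ (by linarith)
    linarith
  have hsum : 0 < ∑ j, a j := by
    refine (Finset.sum_nonneg fun j _ => hnn j).lt_of_ne fun h => ?_
    have hz := (Finset.sum_eq_zero_iff_of_nonneg fun j _ => hnn j).1 h.symm
    have := hge H₀ hH₀ 1 (fun _ => by simp)
    rw [hfa] at this
    simp [fun j => hz j (Finset.mem_univ j)] at this
  refine ⟨fun j => a j / ∑ k, a k, fun j => div_nonneg (hnn j) hsum.le, ?_, fun H hH => ?_⟩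
  · rw [← Finset.sum_div, div_self hsum.ne']
  · have : ∑ j, a j / (∑ k, a k) * F j H = (∑ j, a j * F j H) / ∑ k, a k := by
      rw [Finset.sum_div]
      exact Finset.sum_congr rfl fun j _ => by ring
    rw [this]
    exact div_nonneg (hnonneg H hH) hsum.le

/-- For small `t > 0` the absolute value `|x + t h|` equals its first-order expansion. -/
lemma eventually_abs_add_mul (x h : ℝ) :
    ∀ᶠ t in nhdsWithin (0 : ℝ) (Set.Ioi 0),
      |x + t * h| = |x| + t * (h * Real.sign x + if x ≠ 0 then 0 else |h|) := by
  by_cases hx : x = 0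
  · subst hx
    filter_upwards [self_mem_nhdsWithin] with t ht
    simp [abs_mul, abs_of_pos (show (0 : ℝ) < t from ht)]
  · have hlim : Filter.Tendsto (fun t : ℝ => x + t * h) (nhdsWithin 0 (Set.Ioi 0)) (nhds x) := by
      have : Continuous fun t : ℝ => x + t * h := by fun_prop
      simpa using (this.tendsto 0).mono_left nhdsWithin_le_nhds
    rcases lt_or_gt_of_ne hx with h1 | h1
    · filter_upwards [hlim.eventually (gt_mem_nhds h1)] with t ht
      simp [hx, Real.sign_of_neg h1, abs_of_neg h1, abs_of_neg ht]
      ring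
    · filter_upwards [hlim.eventually (lt_mem_nhds h1)] with t ht
      simp [hx, Real.sign_of_pos h1, abs_of_pos h1, abs_of_pos ht]

lemma eventually_colNorm1 {n : ℕ} (X H : Matrix (Fin n) (Fin n) ℝ) (S : Fin n → Finset (Fin n))
    (hS : ∀ j i, i ∈ S j ↔ X i j ≠ 0) :
    ∀ᶠ t in nhdsWithin (0 : ℝ) (Set.Ioi 0), ∀ j, colNorm1 (X + t • H) j =
      colNorm1 X j + t * ((∑ i ∈ S j, H i j * Real.sign (X i j)) +
        colNorm1 (H - restrict S H) j) := by
  have : ∀ᶠ t in nhdsWithin (0 : ℝ) (Set.Ioi 0), ∀ j i, |X i j + t * H i j| =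
      |X i j| + t * (H i j * Real.sign (X i j) + if X i j ≠ 0 then 0 else |H i j|) :=
    Filter.eventually_all.2 fun j => Filter.eventually_all.2 fun i => eventually_abs_add_mul _ _
  filter_upwards [this] with t ht j
  have h1 : ∑ i ∈ S j, H i j * Real.sign (X i j) = ∑ i, H i j * Real.sign (X i j) := by
    refine Finset.sum_subset (Finset.subset_univ _) fun i _ hi => ?_
    rw [hS, not_not] at hi
    simp [hi]
  have h2 : colNorm1 (H - restrict S H) j = ∑ i, if X i j ≠ 0 then 0 else |H i j| := by
    refine Finset.sum_congr rfl fun i _ => ?_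
    by_cases hx : X i j = 0 <;> simp [restrict, hS, hx]
  rw [h1, h2, ← Finset.sum_add_distrib, Finset.mul_sum]
  simp only [colNorm1, ← Finset.sum_add_distrib]
  exact Finset.sum_congr rfl fun i _ => by simpa using ht j i

lemma colNorm1_le_mnorm1 {n : ℕ} (X : Matrix (Fin n) (Fin n) ℝ) (j : Fin n) :
    colNorm1 X j ≤ mnorm1 X :=
  le_ciSup (Set.finite_range _).bddAbove j

lemma convexOn_colNorm1_add {n : ℕ} (X : Matrix (Fin n) (Fin n) ℝ)
    (K : Set (Matrix (Fin n) (Fin n) ℝ)) (hK : Convex ℝ K) (M : ℝ) (j : Fin n) :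
    ConvexOn ℝ K fun H => colNorm1 (X + H) j - M := by
  refine ⟨hK, fun G _ H _ a b ha hb hab => ?_⟩
  have : colNorm1 (X + (a • G + b • H)) j ≤ a * colNorm1 (X + G) j + b * colNorm1 (X + H) j := by
    simp only [colNorm1, Finset.mul_sum, ← Finset.sum_add_distrib]
    refine Finset.sum_le_sum fun i _ => ?_
    have e : (X + (a • G + b • H)) i j = a * (X + G) i j + b * (X + H) i j := by
      simp only [Matrix.add_apply, Matrix.smul_apply, smul_eq_mul]
      linear_combination (-(X i j)) * hab
    rw [e]
    refine (abs_add_le _ _).trans ?_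
    rw [abs_mul, abs_mul, abs_of_nonneg ha, abs_of_nonneg hb]
  have hM : a * M + b * M = M := by rw [← add_mul, hab, one_mul]
  simp only [smul_eq_mul]
  linarith

/-- non-uniform necessary condition for minimality (Remark 3.2, (3.7)). -/
theorem nonuniform_necessary_condition {n m : ℕ} (hn : 0 < n)
    (Φ : Matrix (Fin n) (Fin n) ℝ →ₗ[ℝ] (Fin m → ℝ))
    (X : Matrix (Fin n) (Fin n) ℝ)
    (S : Fin n → Finset (Fin n))
    (hS : ∀ j i, i ∈ S j ↔ X i j ≠ 0)
    (hmin : ∀ Z : Matrix (Fin n) (Fin n) ℝ, Φ Z = Φ X → mnorm1 X ≤ mnorm1 Z) :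
    ∃ lam : Fin n → ℝ, (∀ j, 0 ≤ lam j) ∧ (∑ j, lam j = 1) ∧
      ∀ H : Matrix (Fin n) (Fin n) ℝ, Φ H = 0 →
        |∑ j, lam j * ∑ i ∈ S j, H i j * Real.sign (X i j)|
          ≤ mnorm1 (H - restrict S H) := by
  have hne : Nonempty (Fin n) := ⟨⟨0, hn⟩⟩
  obtain ⟨lam, hl0, hl1, hl⟩ := exists_weights {H | Φ H = 0} ⟨0, map_zero Φ⟩
    (LinearMap.ker Φ).convex (fun j H => colNorm1 (X + H) j - mnorm1 X)
    (fun j => convexOn_colNorm1_add X _ (LinearMap.ker Φ).convex _ j)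
    (fun H (hH : Φ H = 0) => by
      obtain ⟨j, hj⟩ := exists_eq_ciSup_of_finite (f := colNorm1 (X + H))
      refine ⟨j, sub_nonneg.2 ?_⟩
      rw [hj]
      exact hmin (X + H) (by rw [map_add, hH, add_zero]))
  -- the linear part of the directional derivative cannot drop below `-‖H_{-S}‖₁`
  have key : ∀ H : Matrix (Fin n) (Fin n) ℝ, Φ H = 0 →
      0 ≤ (∑ j, lam j * ∑ i ∈ S j, H i j * Real.sign (X i j)) + mnorm1 (H - restrict S H) := by
    intro H hH
    obtain ⟨t, ht, ht0⟩ :=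
      ((eventually_colNorm1 X H S hS).and self_mem_nhdsWithin).exists
    have ht0 : 0 < t := ht0
    have h1 := hl (t • H) (by simp [hH])
    have h2 : ∑ j, lam j * (colNorm1 (X + t • H) j - mnorm1 X) ≤
        ∑ j, (t * (lam j * ∑ i ∈ S j, H i j * Real.sign (X i j)) +
          lam j * (t * mnorm1 (H - restrict S H))) := by
      refine Finset.sum_le_sum fun j _ => ?_
      rw [ht j]
      have h3 := colNorm1_le_mnorm1 X j
      have h4 := mul_le_mul_of_nonneg_left (colNorm1_le_mnorm1 (H - restrict S H) j) ht0.le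
      have h5 := mul_le_mul_of_nonneg_left (add_le_add h3 h4) (hl0 j)
      linarith
    rw [Finset.sum_add_distrib, ← Finset.mul_sum, ← Finset.sum_mul, hl1, one_mul,
      ← mul_add] at h2
    exact nonneg_of_mul_nonneg_right (h1.trans h2) ht0
  refine ⟨lam, hl0, hl1, fun H hH => abs_le.2 ⟨by linarith [key H hH], ?_⟩⟩
  have h := key (-H) (by simp [hH])
  have e : mnorm1 (-H - restrict S (-H)) = mnorm1 (H - restrict S H) := by
    unfold mnorm1
    congr 1
    ext j
    refine Finset.sum_congr rfl fun i _ => ?_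
    by_cases hi : i ∈ S j <;> simp [restrict, hi]
  rw [e] at h
  simp only [Matrix.neg_apply, neg_mul, Finset.sum_neg_distrib, mul_neg] at h
  linarith

end
end

section
/- Let s be a positive integer and Φ : ℝ^{n×n} → ℝ^m a linear operator satisfying the s-‖·‖₁ Stable Null Space Property with constant 0 < ρ < 1: ‖H_S‖₁ ≤ ρ‖H_{−S}‖₁ for every H ∈ ker Φ and every s-sparsity pattern S. Let X = (x_1, …, x_n) ∈ ℝ^{n×n}, y = Φ(X), and let Z = (z_1, …, z_n) be any matrix with Φ(Z) = y. Then ‖Z − X‖₁ ≤ (1−ρ)^{−1}(1+ρ)(2 max_j σ_s(x_j)₁ + max_j (|z_j|₁ − |x_j|₁)). In particular, if X is l₁-column-flat and X* is a minimizer of inf ‖Z‖₁ subject to Φ(Z) = y, then ‖X* − X‖₁ ≤ 2(1−ρ)^{−1}(1+ρ) max_j σ_s(x_j)₁. -/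
/-!
Put `H = Z - X`, which lies in the kernel of `Φ`, and let `S` collect the best `s`-term supports of
the columns of `X`. Splitting each column along `S` and using the triangle inequality gives
`|h_{-S}|₁ ≤ |h_S|₁ + 2 σ_s(x)₁ + (|z|₁ - |x|₁)` column by column (`col_cone`). Taking the maximum
over the columns and inserting the null space property `‖H_S‖₁ ≤ ρ ‖H_{-S}‖₁` bounds
`(1 - ρ) ‖H_{-S}‖₁` by the error term, and `‖H‖₁ ≤ (1 + ρ) ‖H_{-S}‖₁` finishes the estimate.

If `X` is column-flat and `X*` is a minimizer, each column of `X*` has `l₁`-norm at most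
`‖X*‖₁ ≤ ‖X‖₁ = |x_j|₁`, so the term `max_j (|x*_j|₁ - |x_j|₁)` is nonpositive.
-/

open scoped BigOperators
open scoped Classical

noncomputable section

/-- σ_s(v)₁ : the l1-error of the best s-term approximation of v. -/
def sigmas {n : ℕ} (s : ℕ) (v : Fin n → ℝ) : ℝ :=
  ⨅ T : {T : Finset (Fin n) // T.card ≤ s}, ∑ i ∈ (T.1)ᶜ, |v i|

/-- The infimum defining `sigmas` is attained. -/
lemma exists_sigmas_eq {n : ℕ} (s : ℕ) (v : Fin n → ℝ) :
    ∃ T : Finset (Fin n), T.card ≤ s ∧ ∑ i ∈ Tᶜ, |v i| = sigmas s v := by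
  have : Nonempty {T : Finset (Fin n) // T.card ≤ s} := ⟨⟨∅, by simp⟩⟩
  obtain ⟨T, hT⟩ := exists_eq_ciInf_of_finite
    (f := fun T : {T : Finset (Fin n) // T.card ≤ s} => ∑ i ∈ (T.1)ᶜ, |v i|)
  exact ⟨T.1, T.2, hT⟩

lemma colNorm1_restrict {n : ℕ} (S : Fin n → Finset (Fin n)) (H : Matrix (Fin n) (Fin n) ℝ)
    (j : Fin n) : colNorm1 (restrict S H) j = ∑ i ∈ S j, |H i j| := by
  simp [colNorm1, restrict, apply_ite abs, Finset.sum_ite_mem]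

lemma colNorm1_sub_restrict {n : ℕ} (S : Fin n → Finset (Fin n))
    (H : Matrix (Fin n) (Fin n) ℝ) (j : Fin n) :
    colNorm1 (H - restrict S H) j = ∑ i ∈ (S j)ᶜ, |H i j| := by
  have h : ∀ i, |(H - restrict S H) i j| = if i ∈ (S j)ᶜ then |H i j| else 0 := by
    intro i
    by_cases hi : i ∈ S j <;> simp [restrict, hi]
  simp only [colNorm1, h, Finset.sum_ite_mem, Finset.univ_inter]

/-- The cone-type inequality for a single column: off a set `T`, the difference `z - x` is
controlled by its part on `T`, the tail of `x` and the excess of `|z|₁` over `|x|₁`. -/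
lemma col_cone {n : ℕ} (T : Finset (Fin n)) (x z : Fin n → ℝ) :
    ∑ i ∈ Tᶜ, |z i - x i| ≤
      ∑ i ∈ T, |z i - x i| + (2 * ∑ i ∈ Tᶜ, |x i| + (∑ i, |z i| - ∑ i, |x i|)) := by
  rw [← Finset.sum_add_sum_compl T (fun i => |z i|), ← Finset.sum_add_sum_compl T (fun i => |x i|)]
  have h1 : ∑ i ∈ Tᶜ, |z i - x i| ≤ ∑ i ∈ Tᶜ, |z i| + ∑ i ∈ Tᶜ, |x i| := by
    rw [← Finset.sum_add_distrib]
    exact Finset.sum_le_sum fun i _ => abs_sub _ _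
  have h2 : ∑ i ∈ T, |x i| ≤ ∑ i ∈ T, |z i| + ∑ i ∈ T, |z i - x i| := by
    rw [← Finset.sum_add_distrib]
    refine Finset.sum_le_sum fun i _ => ?_
    have := abs_sub_abs_le_abs_sub (x i) (z i)
    rw [abs_sub_comm] at this
    linarith
  linarith

/-- stable reconstruction under the s-‖·‖₁ Stable Null Space Property
(Theorem 3.2). -/
theorem stable_nullspace_reconstruction {n m s : ℕ} (hn : 0 < n) (hs : 0 < s)
    (Φ : Matrix (Fin n) (Fin n) ℝ →ₗ[ℝ] (Fin m → ℝ))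
    (ρ : ℝ) (hρ0 : 0 < ρ) (hρ1 : ρ < 1)
    (hSNSP : ∀ H : Matrix (Fin n) (Fin n) ℝ, Φ H = 0 →
        ∀ S : Fin n → Finset (Fin n), SparsityPattern n s S →
          mnorm1 (restrict S H) ≤ ρ * mnorm1 (H - restrict S H))
    (X : Matrix (Fin n) (Fin n) ℝ) :
    (∀ Z : Matrix (Fin n) (Fin n) ℝ, Φ Z = Φ X →
        mnorm1 (Z - X) ≤ (1 - ρ)⁻¹ * (1 + ρ) *
          (2 * (⨆ j, sigmas s (fun i => X i j)) + ⨆ j, (colNorm1 Z j - colNorm1 X j)))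
    ∧ (Flat X → ∀ Xstar : Matrix (Fin n) (Fin n) ℝ, Φ Xstar = Φ X →
        (∀ Z : Matrix (Fin n) (Fin n) ℝ, Φ Z = Φ X → mnorm1 Xstar ≤ mnorm1 Z) →
          mnorm1 (Xstar - X) ≤ 2 * (1 - ρ)⁻¹ * (1 + ρ) * ⨆ j, sigmas s (fun i => X i j)) := by
  have : Nonempty (Fin n) := ⟨⟨0, hn⟩⟩
  have hpos : 0 < 1 - ρ := by linarith
  have main : ∀ Z : Matrix (Fin n) (Fin n) ℝ, Φ Z = Φ X →
      mnorm1 (Z - X) ≤ (1 - ρ)⁻¹ * (1 + ρ) *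
        (2 * (⨆ j, sigmas s (fun i => X i j)) + ⨆ j, (colNorm1 Z j - colNorm1 X j)) := by
    intro Z hZ
    choose S hScard hSsig using fun j => exists_sigmas_eq s (fun i => X i j)
    have hker : Φ (Z - X) = 0 := by rw [map_sub, hZ, sub_self]
    have hnsp := hSNSP (Z - X) hker S hScard
    set B := 2 * (⨆ j, sigmas s (fun i => X i j)) + ⨆ j, (colNorm1 Z j - colNorm1 X j) with hB
    set a := mnorm1 (restrict S (Z - X)) with ha
    set b := mnorm1 (Z - X - restrict S (Z - X)) with hb
    have hcone : b ≤ a + B := by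
      refine ciSup_le fun j => ?_
      have h1 := col_cone (S j) (fun i => X i j) (fun i => Z i j)
      have h2 := colNorm1_le_mnorm1 (restrict S (Z - X)) j
      have h3 : sigmas s (fun i => X i j) ≤ ⨆ j, sigmas s (fun i => X i j) :=
        le_ciSup (f := fun j => sigmas s (fun i => X i j)) (Set.finite_range _).bddAbove j
      have h4 : colNorm1 Z j - colNorm1 X j ≤ ⨆ j, (colNorm1 Z j - colNorm1 X j) :=
        le_ciSup (f := fun j => colNorm1 Z j - colNorm1 X j) (Set.finite_range _).bddAbove j
      have h5 := hSsig j
      rw [colNorm1_restrict] at h2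
      rw [colNorm1_sub_restrict]
      simp only [Matrix.sub_apply] at h2 ⊢
      simp only [colNorm1] at h4
      simp only [colNorm1] at hB
      linarith
    have htri : mnorm1 (Z - X) ≤ a + b := by
      refine ciSup_le fun j => ?_
      have h1 := colNorm1_le_mnorm1 (restrict S (Z - X)) j
      have h2 := colNorm1_le_mnorm1 (Z - X - restrict S (Z - X)) j
      rw [colNorm1_restrict] at h1
      rw [colNorm1_sub_restrict] at h2
      rw [colNorm1, ← Finset.sum_add_sum_compl (S j)]
      linarith
    have hbB : b ≤ (1 - ρ)⁻¹ * B := by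
      rw [← div_eq_inv_mul, le_div_iff₀ hpos]
      linarith
    calc mnorm1 (Z - X) ≤ (1 + ρ) * b := by linarith
      _ ≤ (1 + ρ) * ((1 - ρ)⁻¹ * B) := by gcongr
      _ = (1 - ρ)⁻¹ * (1 + ρ) * B := by ring
  refine ⟨main, fun hflat Xstar hX hmin => (main Xstar hX).trans ?_⟩
  have hexc : ⨆ j, (colNorm1 Xstar j - colNorm1 X j) ≤ 0 := by
    refine ciSup_le fun j => ?_
    have h1 := colNorm1_le_mnorm1 Xstar j
    have h2 := hmin X rfl
    have h3 : mnorm1 X ≤ colNorm1 X j := ciSup_le fun k => (hflat k j).le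
    linarith
  have hc : 0 ≤ (1 - ρ)⁻¹ * (1 + ρ) := by positivity
  have := mul_nonpos_of_nonneg_of_nonpos hc hexc
  linarith

end
end

section
/- There is an absolute constant C > 0 such that the following holds. Let Φ : ℝ^{n×n} → ℝ^m be a random linear operator given by Φ(Z)_k = ⟨Φ_k, Z⟩ with all entries Φ_{kij} i.i.d. standard Gaussian N(0,1). Let X ∈ Σ_s^{n×n} be column-wise s-sparse and l₁-column-flat, y = Φ(X) + e ∈ ℝ^m with |e|₂ ≤ η, and X* a minimizer of inf ‖Z‖₁ subject to |y − Φ(Z)|₂ ≤ η. For any δ > 0 and t > 0, if m ≥ (t + 2η/δ + (n·s·log(Cn⁶))^{1/2})², then P[‖X* − X‖_F ≤ δ] ≥ 1 − exp(−t²/2). -/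
/-!
The error `H = X* - X` lies in a cone. Since `X` is feasible, `‖X*‖₁ ≤ ‖X‖₁`; flatness of `X` turns
this into a column-by-column comparison, so the entrywise `l₁` norm of `X*` is at most that of `X`,
and with `S` the support of `X` (at most `n s` entries) and `R = √(n s)` one gets
`|H_{Sᶜ}|₁ ≤ |H_S|₁ ≤ R |H_S|₂` (`cone_of_sum_abs_le`). Moreover `|Φ(H)|₂ ≤ 2 η`. Hence `‖H‖_F > δ`
produces a unit vector `u` of the cone with `|Φ u|₂ ≤ 2 η / δ` (`exists_unitCone_of_lt_frob`).

That such a `u` exists with probability at most `exp (-t² / 2)` is an instance of Gordon's escape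
through a mesh (`cone_bound`). Gordon's comparison of `|Φ u|₂ + g` with `|h|₂ + ⟨w, u⟩` is obtained by
Gaussian interpolation: the derivative along the rotation between the two Gaussian blocks is computed
by Stein's identity and is nonnegative (`gauss_compare`, `gordon_smooth`). Smoothing of the norm and
of the indicator costs an additive constant (`gordon_prob`), absorbed by `R ≥ 1`.
The comparison of tails is integrated to exponential moments (`gordon_exp`, `gordon_tail`), which
replaces concentration of measure: the moment of `-|h|₂` is bounded in `chi_moment`, and the moment of
the width of the cone, via soft thresholding at the level `κ = √(2 log n)`, in `width_moment`. A Markov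
argument with exponent `c = t + 3 R` gives the bound as soon as `√m ≥ t + 2 η / δ + R (κ + 8)`, and
`R (κ + 8)` is at most `√(n s log (exp 96 · n⁶))`.
-/

open scoped BigOperators
open scoped Classical

noncomputable section

open MeasureTheory ProbabilityTheory

/-- The law of a random linear measurement operator ℝ^{n×n} → ℝ^m with i.i.d. standard
Gaussian N(0,1) entries Φ_{kij}. -/
def gaussOp (m n : ℕ) : Measure (Fin m → Fin n → Fin n → ℝ) :=
  Measure.pi fun _ => Measure.pi fun _ => Measure.pi fun _ => gaussianReal 0 1

/-! ### Gaussian integration by parts and interpolation -/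

lemma hasDerivAt_gaussianPDFReal_std (x : ℝ) :
    HasDerivAt (gaussianPDFReal 0 1) (-(x * gaussianPDFReal 0 1 x)) x := by
  have h1 : HasDerivAt (fun y : ℝ => -(y - 0) ^ 2 / (2 * ((1 : NNReal) : ℝ))) (-x) x := by
    have := (((hasDerivAt_id x).sub_const 0).pow 2).neg.div_const (2 * ((1 : NNReal) : ℝ))
    refine this.congr_deriv ?_
    simp
    ring
  have h2 := h1.exp.const_mul ((√(2 * Real.pi * ((1 : NNReal) : ℝ)))⁻¹)
  refine (h2.congr_deriv ?_)
  rw [gaussianPDFReal_def]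
  ring

lemma integrable_id_gaussian : Integrable (fun x : ℝ => x) (gaussianReal 0 1) := by
  have := (memLp_id_gaussianReal (μ := 0) (v := 1) 1).integrable (by simp)
  exact this

lemma integrable_gaussian_iff (f : ℝ → ℝ) : Integrable f (gaussianReal 0 1) ↔
    Integrable (fun x => gaussianPDFReal 0 1 x * f x) := by
  rw [gaussianReal_of_var_ne_zero _ one_ne_zero,
    integrable_withDensity_iff_integrable_smul' (measurable_gaussianPDF _ _)
      (ae_of_all _ fun _ => gaussianPDF_lt_top)]
  simp

/-- Stein's identity `E[g f(g)] = E[f'(g)]` for a standard Gaussian `g`, by integration by parts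
against the density, whose derivative is `-x` times itself. -/
lemma stein_identity (f f' : ℝ → ℝ) (hf : ∀ x, HasDerivAt f (f' x) x) (B : ℝ)
    (hB : ∀ x, |f x| ≤ B) (hB' : ∀ x, |f' x| ≤ B) (hf' : Continuous f') :
    ∫ x, x * f x ∂gaussianReal 0 1 = ∫ x, f' x ∂gaussianReal 0 1 := by
  have hfc : Continuous f := continuous_iff_continuousAt.2 fun x => (hf x).continuousAt
  have i1 : Integrable f (gaussianReal 0 1) :=
    Integrable.of_bound hfc.aestronglyMeasurable B (ae_of_all _ hB)
  have i2 : Integrable f' (gaussianReal 0 1) :=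
    Integrable.of_bound hf'.aestronglyMeasurable B (ae_of_all _ hB')
  have i3 : Integrable (fun x => x * f x) (gaussianReal 0 1) :=
    integrable_id_gaussian.mul_bdd hfc.aestronglyMeasurable (ae_of_all _ hB)
  rw [integral_gaussianReal_eq_integral_smul one_ne_zero,
    integral_gaussianReal_eq_integral_smul one_ne_zero]
  have key := integral_mul_deriv_eq_deriv_mul_of_integrable (u := gaussianPDFReal 0 1) (v := f)
    (u' := fun x => -(x * gaussianPDFReal 0 1 x)) (v' := f')
    (fun x _ => hasDerivAt_gaussianPDFReal_std x) (fun x _ => hf x)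
    ((integrable_gaussian_iff _).1 i2)
    ((((integrable_gaussian_iff _).1 i3).neg).congr (ae_of_all _ fun x => by simp; ring))
    ((integrable_gaussian_iff _).1 i1)
  simp only [smul_eq_mul]
  rw [key, ← integral_neg]
  congr 1
  ext x
  ring

/-- The standard Gaussian measure on `ℝ^ι`. -/
def stdG (ι : Type*) [Fintype ι] : Measure (ι → ℝ) := Measure.pi fun _ => gaussianReal 0 1

instance (ι : Type*) [Fintype ι] : IsProbabilityMeasure (stdG ι) := by
  unfold stdG; infer_instance

/-- Resampling one coordinate preserves the standard Gaussian measure. -/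
lemma measurePreserving_update {ι : Type*} [Fintype ι] (i : ι) :
    MeasurePreserving (fun p : (ι → ℝ) × ℝ => Function.update p.1 i p.2)
      ((stdG ι).prod (gaussianReal 0 1)) (stdG ι) := by
  have hm : Measurable (fun p : (ι → ℝ) × ℝ => Function.update p.1 i p.2) := by
    refine measurable_pi_lambda _ fun j => ?_
    by_cases h : j = i
    · subst h; simpa using measurable_snd
    · simp only [Function.update_of_ne h]
      exact (measurable_pi_apply j).comp measurable_fst
  refine ⟨hm, ?_⟩
  unfold stdG
  refine (Measure.pi_eq fun s hs => ?_).symm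
  rw [Measure.map_apply hm (MeasurableSet.univ_pi hs)]
  have : (fun p : (ι → ℝ) × ℝ => Function.update p.1 i p.2) ⁻¹' Set.pi Set.univ s
      = (Set.pi Set.univ (Function.update s i Set.univ)) ×ˢ s i := by
    ext p
    simp only [Set.mem_preimage, Set.mem_pi, Set.mem_univ, true_imp_iff, Set.mem_prod]
    constructor
    · intro h
      refine ⟨fun j => ?_, by simpa using h i⟩
      by_cases hj : j = i
      · subst hj; simp
      · simpa [hj] using h j
    · rintro ⟨h1, h2⟩ j
      by_cases hj : j = i
      · subst hj; simpa using h2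
      · simpa [hj] using h1 j
  rw [this, Measure.prod_prod, Measure.pi_pi, ← Finset.mul_prod_erase _ _ (Finset.mem_univ i),
    ← Finset.mul_prod_erase Finset.univ (fun j => gaussianReal 0 1 (s j)) (Finset.mem_univ i)]
  simp only [Function.update_self, measure_univ, one_mul]
  rw [mul_comm]
  congr 1
  refine Finset.prod_congr rfl fun j hj => ?_
  rw [Function.update_of_ne (Finset.ne_of_mem_erase hj)]

lemma integrable_coord {ι : Type*} [Fintype ι] (i : ι) :
    Integrable (fun x : ι → ℝ => x i) (stdG ι) :=
  (measurePreserving_eval (fun _ : ι => gaussianReal 0 1) i).integrable_comp_of_integrable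
    integrable_id_gaussian

/-- Gaussian integration by parts in the coordinate `i`, for a function of the scaled
vector `(c j * x j)`. -/
lemma stein_coord {ι : Type*} [Fintype ι] (i : ι) (c : ι → ℝ) (G G' : (ι → ℝ) → ℝ)
    (hG : Continuous G) (hG' : Continuous G') (B : ℝ) (hB : ∀ x, |G x| ≤ B)
    (hB' : ∀ x, |G' x| ≤ B)
    (hd : ∀ x s, HasDerivAt (fun r => G (Function.update x i r)) (G' (Function.update x i s)) s) :
    ∫ x, x i * G (fun j => c j * x j) ∂stdG ι
      = c i * ∫ x, G' (fun j => c j * x j) ∂stdG ι := by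
  have hmul : Continuous fun x : ι → ℝ => fun j => c j * x j := by fun_prop
  have hB0 : 0 ≤ B := (abs_nonneg _).trans (hB 0)
  have int1 : Integrable (fun x : ι → ℝ => x i * G (fun j => c j * x j)) (stdG ι) :=
    (integrable_coord i).mul_bdd (hG.comp hmul).aestronglyMeasurable
      (ae_of_all _ fun x => hB _)
  have int2 : Integrable (fun x : ι → ℝ => G' (fun j => c j * x j)) (stdG ι) :=
    Integrable.of_bound (hG'.comp hmul).aestronglyMeasurable B (ae_of_all _ fun x => hB' _)
  have mp := measurePreserving_update i
  have j1 : Integrable (fun p : (ι → ℝ) × ℝ => Function.update p.1 i p.2 i *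
      G (fun j => c j * Function.update p.1 i p.2 j)) ((stdG ι).prod (gaussianReal 0 1)) :=
    mp.integrable_comp_of_integrable int1
  have j2 : Integrable (fun p : (ι → ℝ) × ℝ => G' (fun j => c j * Function.update p.1 i p.2 j))
      ((stdG ι).prod (gaussianReal 0 1)) :=
    mp.integrable_comp_of_integrable int2
  rw [← mp.map_eq, integral_map mp.measurable.aemeasurable
    (by rw [mp.map_eq]; exact int1.aestronglyMeasurable),
    integral_map mp.measurable.aemeasurable
    (by rw [mp.map_eq]; exact int2.aestronglyMeasurable),
    integral_prod _ j1, integral_prod _ j2, ← integral_const_mul]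
  congr 1
  ext x
  rw [← integral_const_mul]
  have hup : ∀ r : ℝ, (fun j => c j * Function.update x i r j)
      = Function.update (fun j => c j * x j) i (c i * r) := by
    intro r
    ext j
    by_cases hj : j = i
    · subst hj; simp
    · simp [hj]
  simp only [Function.update_self]
  refine stein_identity (fun r => G (fun j => c j * Function.update x i r j))
    (fun r => c i * G' (fun j => c j * Function.update x i r j)) ?_ (max B (|c i| * B)) ?_ ?_ ?_
  · intro r
    simp only [hup]
    have := (hd (fun j => c j * x j) (c i * r)).comp r ((hasDerivAt_id r).const_mul (c i))
    refine this.congr_deriv ?_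
    simp [mul_comm]
  · intro r; exact (hB _).trans (le_max_left _ _)
  · intro r
    rw [abs_mul]
    exact (mul_le_mul_of_nonneg_left (hB' _) (abs_nonneg _)).trans (le_max_right _ _)
  · have : Continuous fun r => Function.update x i r := continuous_const.update i continuous_id
    exact continuous_const.mul (hG'.comp (hmul.comp this))

/-- Gaussian interpolation. The coordinates are split by `pos`; the vector in which the coordinates
are multiplied by `sin θ` (where `pos` holds) or `cos θ` (elsewhere) moves from one block to the other
as `θ` runs over `[0, π/2]`. By integration by parts the `θ`-derivative of the expectation of `F` is
`sin θ cos θ` times the expectation of the signed sum of pure second derivatives in `hL`. `D1` and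
`D2` are the first and the pure second partial derivatives of `F`. -/
lemma gauss_compare {ι : Type*} [Fintype ι] (pos : ι → Prop) (F : (ι → ℝ) → ℝ)
    (D1 D2 : ι → (ι → ℝ) → ℝ) (hF : Continuous F) (hD1 : ∀ i, Continuous (D1 i))
    (hD2 : ∀ i, Continuous (D2 i)) (B : ℝ) (hBF : ∀ x, |F x| ≤ B)
    (hB1 : ∀ i x, |D1 i x| ≤ B) (hB2 : ∀ i x, |D2 i x| ≤ B)
    (hd1 : ∀ (x : ℝ → ι → ℝ) (x' : ι → ℝ) (r : ℝ), HasDerivAt x x' r →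
      HasDerivAt (fun r => F (x r)) (∑ i, x' i * D1 i (x r)) r)
    (hd2 : ∀ i x s, HasDerivAt (fun r => D1 i (Function.update x i r))
      (D2 i (Function.update x i s)) s)
    (hL : ∀ x, 0 ≤ ∑ i, (if pos i then (1 : ℝ) else -1) * D2 i x) :
    ∫ x, F (fun i => if pos i then 0 else x i) ∂stdG ι
      ≤ ∫ x, F (fun i => if pos i then x i else 0) ∂stdG ι := by
  set c : ℝ → ι → ℝ := fun θ i => if pos i then Real.sin θ else Real.cos θ with hc
  set c' : ℝ → ι → ℝ := fun θ i => if pos i then Real.cos θ else -Real.sin θ with hc'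
  have hcd : ∀ θ i, HasDerivAt (fun θ => c θ i) (c' θ i) θ := by
    intro θ i
    by_cases h : pos i
    · simpa [hc, hc', h] using Real.hasDerivAt_sin θ
    · simpa [hc, hc', h] using Real.hasDerivAt_cos θ
  have hc'1 : ∀ θ i, |c' θ i| ≤ 1 := by
    intro θ i
    by_cases h : pos i
    · simpa [hc', h] using Real.abs_cos_le_one θ
    · simpa [hc', h] using Real.abs_sin_le_one θ
  have hB0 : 0 ≤ B := (abs_nonneg _).trans (hBF 0)
  have hmul : ∀ θ, Continuous fun x : ι → ℝ => fun j => c θ j * x j := fun θ => by fun_prop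
  set Ψ : ℝ → ℝ := fun θ => ∫ x, F (fun j => c θ j * x j) ∂stdG ι with hΨ
  have hder : ∀ θ, HasDerivAt Ψ
      (∫ x, ∑ i, (c' θ i * x i) * D1 i (fun j => c θ j * x j) ∂stdG ι) θ := by
    intro θ
    refine (hasDerivAt_integral_of_dominated_loc_of_deriv_le (s := Set.univ)
      (bound := fun x : ι → ℝ => ∑ i, |x i| * B)
      (F := fun θ x => F (fun j => c θ j * x j))
      (F' := fun θ x => ∑ i, (c' θ i * x i) * D1 i (fun j => c θ j * x j))
      Filter.univ_mem ?_ ?_ ?_ ?_ ?_ ?_).2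
    · exact Filter.Eventually.of_forall fun θ => (hF.comp (hmul θ)).aestronglyMeasurable
    · exact Integrable.of_bound (hF.comp (hmul θ)).aestronglyMeasurable B
        (ae_of_all _ fun x => hBF _)
    · refine Continuous.aestronglyMeasurable ?_
      refine continuous_finsetSum _ fun i _ => ?_
      have := (hD1 i).comp (hmul θ)
      exact (continuous_const.mul (continuous_apply i)).mul this
    · refine ae_of_all _ fun x θ _ => ?_
      rw [Real.norm_eq_abs]
      refine (Finset.abs_sum_le_sum_abs _ _).trans (Finset.sum_le_sum fun i _ => ?_)
      rw [abs_mul, abs_mul]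
      have : |c' θ i| * |x i| ≤ |x i| := by
        have := mul_le_mul_of_nonneg_right (hc'1 θ i) (abs_nonneg (x i))
        simpa using this
      exact mul_le_mul this (hB1 _ _) (abs_nonneg _) (abs_nonneg _)
    · exact integrable_finsetSum _ fun i _ => ((integrable_coord i).abs).mul_const B
    · refine ae_of_all _ fun x θ _ => ?_
      exact hd1 (fun θ j => c θ j * x j) (fun j => c' θ j * x j) θ
        (hasDerivAt_pi.2 fun j => (hcd θ j).mul_const (x j))
  have hval : ∀ θ, ∫ x, ∑ i, (c' θ i * x i) * D1 i (fun j => c θ j * x j) ∂stdG ι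
      = Real.sin θ * Real.cos θ * ∫ x, ∑ i, (if pos i then (1 : ℝ) else -1) *
          D2 i (fun j => c θ j * x j) ∂stdG ι := by
    intro θ
    have int1 : ∀ i, Integrable (fun x : ι → ℝ => x i * D1 i (fun j => c θ j * x j)) (stdG ι) :=
      fun i => (integrable_coord i).mul_bdd ((hD1 i).comp (hmul θ)).aestronglyMeasurable
        (ae_of_all _ fun x => hB1 _ _)
    have int2 : ∀ i, Integrable (fun x : ι → ℝ => D2 i (fun j => c θ j * x j)) (stdG ι) :=
      fun i => Integrable.of_bound ((hD2 i).comp (hmul θ)).aestronglyMeasurable B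
        (ae_of_all _ fun x => hB2 _ _)
    simp only [mul_assoc]
    rw [integral_finsetSum _ fun i _ => (int1 i).const_mul _,
      integral_finsetSum _ fun i _ => (int2 i).const_mul _, Finset.mul_sum, Finset.mul_sum]
    refine Finset.sum_congr rfl fun i _ => ?_
    rw [integral_const_mul, integral_const_mul, stein_coord i (c θ) (D1 i) (D2 i) (hD1 i) (hD2 i)
      B (hB1 i) (hB2 i) (hd2 i)]
    by_cases h : pos i
    · simp [hc, hc', h]; ring
    · simp [hc, hc', h]
  have hmono : MonotoneOn Ψ (Set.Icc 0 (Real.pi / 2)) := by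
    refine monotoneOn_of_deriv_nonneg (convex_Icc _ _)
      (fun θ _ => (hder θ).continuousAt.continuousWithinAt)
      (fun θ _ => (hder θ).differentiableAt.differentiableWithinAt) fun θ hθ => ?_
    rw [interior_Icc] at hθ
    rw [(hder θ).deriv, hval]
    refine mul_nonneg (mul_nonneg ?_ ?_) (integral_nonneg fun x => hL _)
    · exact Real.sin_nonneg_of_nonneg_of_le_pi hθ.1.le (by linarith [hθ.2, Real.pi_pos])
    · exact Real.cos_nonneg_of_neg_pi_div_two_le_of_le (by linarith [hθ.1, Real.pi_pos]) hθ.2.le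
  have h0 := hmono (Set.left_mem_Icc.2 (by positivity)) (Set.right_mem_Icc.2 (by positivity))
    (by positivity : (0 : ℝ) ≤ Real.pi / 2)
  simp only [hΨ, hc, Real.sin_zero, Real.cos_zero, Real.sin_pi_div_two, Real.cos_pi_div_two,
    ite_mul, zero_mul, one_mul] at h0
  exact h0

/-! ### The interpolated process and its derivatives -/

/-- Indices of the independent Gaussians in Gordon's comparison. The left block holds a matrix `Φ`
(indexed by `α × β`) and one extra scalar `g`; the right block holds a vector `h` indexed by `α` and a
vector `w` indexed by `β`. -/
abbrev GIdx (α β : Type*) := ((α × β) ⊕ Unit) ⊕ (α ⊕ β)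

section Gordon
variable {α β : Type*} [Fintype α] [Fintype β]

/-- The `k`-th coordinate of `Φ u + h`, as a linear functional of the Gaussian vector. -/
def gY (u : β → ℝ) (k : α) : (GIdx α β → ℝ) →L[ℝ] ℝ :=
  (∑ j, u j • ContinuousLinearMap.proj (R := ℝ) (φ := fun _ : GIdx α β => ℝ)
    (Sum.inl (Sum.inl (k, j)))) + ContinuousLinearMap.proj (Sum.inr (Sum.inl k))

/-- The functional `g + ⟨w, u⟩` of the Gaussian vector. -/
def gB (u : β → ℝ) : (GIdx α β → ℝ) →L[ℝ] ℝ :=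
  ContinuousLinearMap.proj (R := ℝ) (φ := fun _ : GIdx α β => ℝ) (Sum.inl (Sum.inr ())) +
    ∑ j, u j • ContinuousLinearMap.proj (Sum.inr (Sum.inr j))

lemma gY_apply (u : β → ℝ) (k : α) (x : GIdx α β → ℝ) :
    gY u k x = ∑ j, u j * x (Sum.inl (Sum.inl (k, j))) + x (Sum.inr (Sum.inl k)) := by
  simp [gY]

lemma gB_apply (u : β → ℝ) (x : GIdx α β → ℝ) :
    gB u x = x (Sum.inl (Sum.inr ())) + ∑ j, u j * x (Sum.inr (Sum.inr j)) := by
  simp [gB]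

/-- The smoothed norm `√(1 + |Φ u + h|₂²)`; the added `1` makes it differentiable everywhere, with
bounded derivatives. -/
def gN (u : β → ℝ) (x : GIdx α β → ℝ) : ℝ := √(1 + ∑ k, (gY u k x) ^ 2)

/-- The process to which interpolation is applied. With only the left block present it is about
`|Φ u|₂ + g`, with only the right block about `|h|₂ + ⟨w, u⟩`. -/
def gM (u : β → ℝ) (x : GIdx α β → ℝ) : ℝ := gN u x + gB u x

/-- The derivative of `gM u` at `x` in the direction `e`. -/
def dM (u : β → ℝ) (x e : GIdx α β → ℝ) : ℝ := (∑ k, gY u k x * gY u k e) / gN u x + gB u e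

/-- The second derivative of `gM u` at `x` in the direction `e`, twice. -/
def d2M (u : β → ℝ) (x e : GIdx α β → ℝ) : ℝ :=
  (∑ k, (gY u k e) ^ 2) / gN u x - (∑ k, gY u k x * gY u k e) ^ 2 / gN u x ^ 3

lemma gN_arg_pos (u : β → ℝ) (x : GIdx α β → ℝ) : 0 < 1 + ∑ k, (gY u k x) ^ 2 :=
  add_pos_of_pos_of_nonneg one_pos (Finset.sum_nonneg fun _ _ => sq_nonneg _)

lemma gN_pos (u : β → ℝ) (x : GIdx α β → ℝ) : 0 < gN u x := Real.sqrt_pos.2 (gN_arg_pos u x)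

lemma gN_sq (u : β → ℝ) (x : GIdx α β → ℝ) : gN u x ^ 2 = 1 + ∑ k, (gY u k x) ^ 2 :=
  Real.sq_sqrt (gN_arg_pos u x).le

lemma one_le_gN (u : β → ℝ) (x : GIdx α β → ℝ) : 1 ≤ gN u x :=
  Real.one_le_sqrt.2 (le_add_of_nonneg_right (Finset.sum_nonneg fun _ _ => sq_nonneg _))

lemma continuous_gN (u : β → ℝ) : Continuous (gN (α := α) u) := by
  unfold gN; fun_prop

lemma continuous_gM (u : β → ℝ) : Continuous (gM (α := α) u) := by
  have := continuous_gN (α := α) u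
  unfold gM; fun_prop

lemma continuous_dM (u : β → ℝ) (e : GIdx α β → ℝ) : Continuous fun x => dM u x e := by
  have := continuous_gN (α := α) u
  unfold dM
  exact (Continuous.div (by fun_prop) this fun x => (gN_pos u x).ne').add continuous_const

lemma continuous_d2M (u : β → ℝ) (e : GIdx α β → ℝ) : Continuous fun x => d2M u x e := by
  have := continuous_gN (α := α) u
  unfold d2M
  exact (Continuous.div (by fun_prop) this fun x => (gN_pos u x).ne').sub
    (Continuous.div (by fun_prop) (this.pow 3) fun x => (pow_pos (gN_pos u x) 3).ne')

lemma hasDerivAt_gN (u : β → ℝ) {x : ℝ → GIdx α β → ℝ} {x' : GIdx α β → ℝ} {r : ℝ}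
    (hx : HasDerivAt x x' r) :
    HasDerivAt (fun r => gN u (x r)) ((∑ k, gY u k (x r) * gY u k x') / gN u (x r)) r := by
  have hY : ∀ k, HasDerivAt (fun r => gY u k (x r)) (gY u k x') r := fun k =>
    (gY u k).hasFDerivAt.comp_hasDerivAt r hx
  have h1 : HasDerivAt (fun r => 1 + ∑ k, (gY u k (x r)) ^ 2)
      (∑ k, 2 * (gY u k (x r) * gY u k x')) r := by
    refine HasDerivAt.const_add 1 (HasDerivAt.fun_sum fun k _ => ?_)
    refine ((hY k).fun_pow 2).congr_deriv ?_
    simp; ring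
  refine (h1.sqrt (gN_arg_pos u (x r)).ne').congr_deriv ?_
  rw [← Finset.mul_sum, mul_div_mul_left _ _ two_ne_zero]
  rfl

lemma hasDerivAt_gM (u : β → ℝ) {x : ℝ → GIdx α β → ℝ} {x' : GIdx α β → ℝ} {r : ℝ}
    (hx : HasDerivAt x x' r) : HasDerivAt (fun r => gM u (x r)) (dM u (x r) x') r :=
  (hasDerivAt_gN u hx).add ((gB u).hasFDerivAt.comp_hasDerivAt r hx)

lemma hasDerivAt_dM (u : β → ℝ) {x : ℝ → GIdx α β → ℝ} {e : GIdx α β → ℝ} {r : ℝ}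
    (hx : HasDerivAt x e r) : HasDerivAt (fun r => dM u (x r) e) (d2M u (x r) e) r := by
  have hY : ∀ k, HasDerivAt (fun r => gY u k (x r)) (gY u k e) r := fun k =>
    (gY u k).hasFDerivAt.comp_hasDerivAt r hx
  have h1 : HasDerivAt (fun r => ∑ k, gY u k (x r) * gY u k e) (∑ k, (gY u k e) ^ 2) r := by
    refine HasDerivAt.fun_sum fun k _ => ?_
    refine ((hY k).mul_const _).congr_deriv ?_
    ring
  have h2 := h1.fun_div (hasDerivAt_gN u hx) (gN_pos u (x r)).ne'
  refine (h2.add_const (gB u e)).congr_deriv ?_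
  unfold d2M
  have := (gN_pos u (x r)).ne'
  field_simp

lemma dM_lin (u : β → ℝ) (x e : GIdx α β → ℝ) :
    dM u x e = ∑ i, e i * dM u x (Pi.single i 1) := by
  let T : (GIdx α β → ℝ) →ₗ[ℝ] ℝ :=
    { toFun := fun e => dM u x e
      map_add' := by
        intro a b
        simp only [dM, map_add, mul_add, Finset.sum_add_distrib]
        ring
      map_smul' := by
        intro c a
        simp only [dM, map_smul, smul_eq_mul, RingHom.id_apply, mul_add, mul_div_assoc',
          Finset.mul_sum]
        congr 2
        exact Finset.sum_congr rfl fun k _ => by ring }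
  have := T.pi_apply_eq_sum_univ e
  simp only [smul_eq_mul] at this
  refine this.trans (Finset.sum_congr rfl fun i _ => ?_)
  have hs : (fun j => if i = j then (1 : ℝ) else 0) = Pi.single i 1 := by
    funext j
    simp [Pi.single_apply, eq_comm]
  rw [hs]
  rfl

@[simp] lemma gY_single_Φ (u : β → ℝ) (k k' : α) (j : β) :
    gY u k (Pi.single (Sum.inl (Sum.inl (k', j))) 1) = if k = k' then u j else 0 := by
  rw [gY_apply]
  by_cases h : k = k' <;> simp [h, Pi.single_apply]

@[simp] lemma gY_single_g (u : β → ℝ) (k : α) (z : Unit) :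
    gY (β := β) u k (Pi.single (Sum.inl (Sum.inr z)) 1) = 0 := by
  rw [gY_apply]; simp

@[simp] lemma gY_single_h (u : β → ℝ) (k k' : α) :
    gY u k (Pi.single (Sum.inr (Sum.inl k')) 1) = if k = k' then 1 else 0 := by
  rw [gY_apply]; simp [Pi.single_apply]

@[simp] lemma gY_single_w (u : β → ℝ) (k : α) (j : β) :
    gY u k (Pi.single (Sum.inr (Sum.inr j)) 1) = 0 := by
  rw [gY_apply]; simp

@[simp] lemma gB_single_Φ (u : β → ℝ) (p : α × β) :
    gB u (Pi.single (Sum.inl (Sum.inl p)) 1) = 0 := by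
  rw [gB_apply]; simp

@[simp] lemma gB_single_g (u : β → ℝ) (z : Unit) :
    gB (α := α) u (Pi.single (Sum.inl (Sum.inr z)) 1) = 1 := by
  rw [gB_apply]; simp

@[simp] lemma gB_single_h (u : β → ℝ) (k : α) :
    gB u (Pi.single (Sum.inr (Sum.inl k)) 1) = 0 := by
  rw [gB_apply]; simp

@[simp] lemma gB_single_w (u : β → ℝ) (j : β) :
    gB (α := α) u (Pi.single (Sum.inr (Sum.inr j)) 1) = u j := by
  rw [gB_apply]; simp [Pi.single_apply]

/-- The sign with which a coordinate enters the interpolation derivative: `1` on the left block, `-1`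
on the right one. -/
def gSign (i : GIdx α β) : ℝ := if i.isLeft = true then 1 else -1

/-- The signed Gram form of the first derivatives factorises. For unit vectors both factors are
nonnegative, and the first one vanishes when `u = v`; this is the covariance comparison in Gordon's
inequality. -/
lemma sum_sign_dM (u v : β → ℝ) (x : GIdx α β → ℝ) :
    ∑ i, gSign i * (dM u x (Pi.single i 1) * dM v x (Pi.single i 1))
      = (1 - ∑ j, u j * v j) *
        (1 - ∑ k, (gY u k x / gN u x) * (gY v k x / gN v x)) := by
  simp only [Fintype.sum_sum_type, gSign, dM, Fintype.sum_prod_type]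
  simp
  have : ∀ k : α, ∑ j, gY u k x * u j / gN u x * (gY v k x * v j / gN v x)
      = (∑ j, u j * v j) * (gY u k x / gN u x * (gY v k x / gN v x)) := by
    intro k
    rw [Finset.sum_mul]
    exact Finset.sum_congr rfl fun j _ => by ring
  simp only [this, ← Finset.mul_sum]
  ring

lemma sum_sign_d2M (u : β → ℝ) (hu : ∑ j, u j ^ 2 = 1) (x : GIdx α β → ℝ) :
    ∑ i, gSign i * d2M u x (Pi.single i 1) = 0 := by
  simp only [Fintype.sum_sum_type, gSign, d2M, Fintype.sum_prod_type]
  simp [mul_pow, ← Finset.sum_div, ← Finset.mul_sum, hu, ite_pow]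

lemma sum_div_gN_le (u v : β → ℝ) (x : GIdx α β → ℝ) :
    ∑ k, (gY u k x / gN u x) * (gY v k x / gN v x) ≤ 1 := by
  have h : ∀ w : β → ℝ, ∑ k, (gY w k x / gN w x) ^ 2 ≤ 1 := by
    intro w
    simp only [div_pow, ← Finset.sum_div]
    rw [div_le_one (pow_pos (gN_pos w x) 2), gN_sq]
    linarith
  have : ∀ k, (gY u k x / gN u x) * (gY v k x / gN v x) ≤
      ((gY u k x / gN u x) ^ 2 + (gY v k x / gN v x) ^ 2) / 2 := fun k => by
    nlinarith [sq_nonneg (gY u k x / gN u x - gY v k x / gN v x)]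
  refine (Finset.sum_le_sum fun k _ => this k).trans ?_
  rw [← Finset.sum_div, Finset.sum_add_distrib]
  linarith [h u, h v]

lemma sum_mul_le_one (u v : β → ℝ) (hu : ∑ j, u j ^ 2 = 1) (hv : ∑ j, v j ^ 2 = 1) :
    ∑ j, u j * v j ≤ 1 := by
  have : ∀ k, u k * v k ≤ (u k ^ 2 + v k ^ 2) / 2 := fun k => by
    nlinarith [sq_nonneg (u k - v k)]
  refine (Finset.sum_le_sum fun k _ => this k).trans ?_
  rw [← Finset.sum_div, Finset.sum_add_distrib]
  linarith

lemma sum_sign_dM_nonneg (u v : β → ℝ) (hu : ∑ j, u j ^ 2 = 1) (hv : ∑ j, v j ^ 2 = 1)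
    (x : GIdx α β → ℝ) :
    0 ≤ ∑ i, gSign i * (dM u x (Pi.single i 1) * dM v x (Pi.single i 1)) := by
  rw [sum_sign_dM]
  exact mul_nonneg (by linarith [sum_mul_le_one u v hu hv]) (by linarith [sum_div_gN_le u v x])

lemma sum_sign_dM_self (u : β → ℝ) (hu : ∑ j, u j ^ 2 = 1) (x : GIdx α β → ℝ) :
    ∑ i, gSign i * (dM u x (Pi.single i 1)) ^ 2 = 0 := by
  have := sum_sign_dM u u x
  simp only [← pow_two] at this
  rw [this, hu]
  ring

lemma abs_gY_div_le (u : β → ℝ) (k : α) (x : GIdx α β → ℝ) : |gY u k x| / gN u x ≤ 1 := by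
  rw [div_le_one (gN_pos u x)]
  refine Real.abs_le_sqrt ?_
  have := Finset.single_le_sum (f := fun k => (gY u k x) ^ 2) (fun _ _ => sq_nonneg _)
    (Finset.mem_univ k)
  linarith

/-- Uniform boundedness. -/
def BddFn {X : Type*} (f : X → ℝ) : Prop := ∃ B, ∀ x, |f x| ≤ B

namespace BddFn
variable {X : Type*} {f g : X → ℝ}
lemma const (c : ℝ) : BddFn fun _ : X => c := ⟨|c|, fun _ => le_rfl⟩
lemma add (hf : BddFn f) (hg : BddFn g) : BddFn fun x => f x + g x := by
  obtain ⟨A, hA⟩ := hf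
  obtain ⟨B, hB⟩ := hg
  exact ⟨A + B, fun x => (abs_add_le _ _).trans (add_le_add (hA x) (hB x))⟩
lemma mul (hf : BddFn f) (hg : BddFn g) : BddFn fun x => f x * g x := by
  obtain ⟨A, hA⟩ := hf
  obtain ⟨B, hB⟩ := hg
  exact ⟨A * B, fun x => by
    rw [abs_mul]
    exact mul_le_mul (hA x) (hB x) (abs_nonneg _) ((abs_nonneg _).trans (hA x))⟩
lemma sum {ι : Type*} (s : Finset ι) {f : ι → X → ℝ} (h : ∀ i, BddFn (f i)) :
    BddFn fun x => ∑ i ∈ s, f i x := by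
  choose B hB using h
  exact ⟨∑ i ∈ s, B i, fun x => (Finset.abs_sum_le_sum_abs _ _).trans
    (Finset.sum_le_sum fun i _ => hB i x)⟩
lemma prod {ι : Type*} (s : Finset ι) {f : ι → X → ℝ} (h : ∀ i, BddFn (f i)) :
    BddFn fun x => ∏ i ∈ s, f i x := by
  choose B hB using h
  exact ⟨∏ i ∈ s, B i, fun x => by
    rw [Finset.abs_prod]
    exact Finset.prod_le_prod (fun _ _ => abs_nonneg _) fun i _ => hB i x⟩
lemma comp {Y : Type*} (hf : BddFn f) (φ : Y → X) : BddFn fun y => f (φ y) := by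
  obtain ⟨A, hA⟩ := hf
  exact ⟨A, fun y => hA _⟩
end BddFn

lemma bdd_dir (u : β → ℝ) (e : GIdx α β → ℝ) :
    BddFn fun x => (∑ k, gY u k x * gY u k e) / gN u x := by
  have : (fun x => (∑ k, gY u k x * gY u k e) / gN u x)
      = fun x => ∑ k, (gY u k x / gN u x) * gY u k e := by
    ext x
    rw [Finset.sum_div]
    exact Finset.sum_congr rfl fun k _ => by ring
  rw [this]
  refine BddFn.sum _ fun k => BddFn.mul ⟨1, fun x => ?_⟩ (BddFn.const _)
  rw [abs_div, abs_of_pos (gN_pos u x)]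
  exact abs_gY_div_le u k x

lemma bdd_inv_gN (u : β → ℝ) : BddFn fun x : GIdx α β → ℝ => (gN u x)⁻¹ := by
  refine ⟨1, fun x => ?_⟩
  rw [abs_of_pos (inv_pos.2 (gN_pos u x))]
  exact inv_le_one_of_one_le₀ (one_le_gN u x)

lemma bdd_dM (u : β → ℝ) (e : GIdx α β → ℝ) : BddFn fun x => dM u x e :=
  (bdd_dir u e).add (BddFn.const _)

lemma bdd_d2M (u : β → ℝ) (e : GIdx α β → ℝ) : BddFn fun x => d2M u x e := by
  have : (fun x => d2M u x e) = fun x => (∑ k, (gY u k e) ^ 2) * (gN u x)⁻¹ +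
      (-1) * (((∑ k, gY u k x * gY u k e) / gN u x) * ((∑ k, gY u k x * gY u k e) / gN u x) *
        (gN u x)⁻¹) := by
    ext x
    unfold d2M
    have := (gN_pos u x).ne'
    field_simp
    ring
  rw [this]
  exact ((BddFn.const _).mul (bdd_inv_gN u)).add ((BddFn.const _).mul
    (((bdd_dir u e).mul (bdd_dir u e)).mul (bdd_inv_gN u)))

end Gordon

/-! ### Gordon's comparison, smooth form -/

/-- A smooth nondecreasing step from `0` on `(-∞, 0]` to `1` on `[1, ∞)`, with bounded first and second
derivatives. -/
lemma smooth_step : ∃ ψ ψ' ψ'' : ℝ → ℝ, (∀ x, HasDerivAt ψ (ψ' x) x) ∧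
    (∀ x, HasDerivAt ψ' (ψ'' x) x) ∧ Continuous ψ'' ∧ BddFn ψ' ∧ BddFn ψ'' ∧
    (∀ x, 0 ≤ ψ' x) ∧ (∀ x, 0 ≤ ψ x) ∧ (∀ x, ψ x ≤ 1) ∧ (∀ x ≤ 0, ψ x = 0) ∧
    (∀ x, 1 ≤ x → ψ x = 1) := by
  have hC : ContDiff ℝ 2 Real.smoothTransition := Real.smoothTransition.contDiff (n := 2)
  have hC1 : ContDiff ℝ 1 (deriv Real.smoothTransition) := by
    have : ContDiff ℝ (1 + 1) Real.smoothTransition := by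
      convert hC using 1
      norm_num
    exact (contDiff_succ_iff_deriv.1 this).2.2
  have hC0 : Continuous (deriv (deriv Real.smoothTransition)) :=
    hC1.continuous_deriv le_rfl
  have hs : HasCompactSupport (deriv Real.smoothTransition) := by
    refine HasCompactSupport.of_support_subset_isCompact (isCompact_Icc (a := (0 : ℝ)) (b := 1)) ?_
    intro x hx
    by_contra h
    apply hx
    rw [Set.mem_Icc, not_and_or, not_le, not_le] at h
    rcases h with h | h
    · have : Real.smoothTransition =ᶠ[nhds x] fun _ => 0 := by
        filter_upwards [Iio_mem_nhds h] with y hy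
        exact Real.smoothTransition.zero_of_nonpos (le_of_lt hy)
      simp [this.deriv_eq]
    · have : Real.smoothTransition =ᶠ[nhds x] fun _ => 1 := by
        filter_upwards [Ioi_mem_nhds h] with y hy
        exact Real.smoothTransition.one_of_one_le (le_of_lt hy)
      simp [this.deriv_eq]
  refine ⟨Real.smoothTransition, deriv Real.smoothTransition,
    deriv (deriv Real.smoothTransition), fun x => ?_, fun x => ?_, hC0, ?_, ?_, fun x => ?_,
    Real.smoothTransition.nonneg, Real.smoothTransition.le_one,
    fun x hx => Real.smoothTransition.zero_of_nonpos hx,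
    fun x hx => Real.smoothTransition.one_of_one_le hx⟩
  · exact (hC.differentiable (by norm_num) x).hasDerivAt
  · exact (hC1.differentiable (by norm_num) x).hasDerivAt
  · exact hs.exists_bound_of_continuous hC1.continuous
  · exact hs.deriv.exists_bound_of_continuous hC0
  · exact Real.smoothTransition.monotone.deriv_nonneg

section Gordon
variable {α β υ : Type*} [Fintype α] [Fintype β] [Fintype υ]

/-- Gordon's comparison for a product of smooth increasing functions of the `gM (u a)`. In the
interpolation derivative the terms carrying a second derivative cancel (`sum_sign_dM_self`,
`sum_sign_d2M`), and the mixed terms are nonnegative (`sum_sign_dM_nonneg`). -/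
lemma gordon_smooth (u : υ → β → ℝ) (hu : ∀ a, ∑ j, u a j ^ 2 = 1)
    (ψ ψ' ψ'' : ℝ → ℝ) (h1 : ∀ x, HasDerivAt ψ (ψ' x) x) (h2 : ∀ x, HasDerivAt ψ' (ψ'' x) x)
    (hc : Continuous ψ'') (hb1 : BddFn ψ') (hb2 : BddFn ψ'') (hp : ∀ x, 0 ≤ ψ' x)
    (h0 : ∀ x, 0 ≤ ψ x) (hle : ∀ x, ψ x ≤ 1) :
    ∫ x, ∏ a, ψ (gM (α := α) (u a) (Sum.elim 0 fun i => x (Sum.inr i)))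
        ∂stdG (GIdx α β)
      ≤ ∫ x, ∏ a, ψ (gM (u a) (Sum.elim (fun i => x (Sum.inl i)) 0))
        ∂stdG (GIdx α β) := by
  have hψc : Continuous ψ := continuous_iff_continuousAt.2 fun x => (h1 x).continuousAt
  have hψ'c : Continuous ψ' := continuous_iff_continuousAt.2 fun x => (h2 x).continuousAt
  have hb0 : BddFn ψ := ⟨1, fun x => by rw [abs_of_nonneg (h0 x)]; exact hle x⟩
  set f : υ → (GIdx α β → ℝ) → ℝ := fun a x => ψ (gM (u a) x) with hf
  set f1 : υ → (GIdx α β → ℝ) → (GIdx α β → ℝ) → ℝ :=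
    fun a x e => ψ' (gM (u a) x) * dM (u a) x e with hf1
  set f2 : υ → (GIdx α β → ℝ) → (GIdx α β → ℝ) → ℝ :=
    fun a x e => ψ'' (gM (u a) x) * dM (u a) x e ^ 2 + ψ' (gM (u a) x) * d2M (u a) x e with hf2
  have fc : ∀ a, Continuous (f a) := fun a => hψc.comp (continuous_gM _)
  have f1c : ∀ a e, Continuous fun x => f1 a x e := fun a e =>
    (hψ'c.comp (continuous_gM _)).mul (continuous_dM _ _)
  have f2c : ∀ a e, Continuous fun x => f2 a x e := fun a e =>
    ((hc.comp (continuous_gM _)).mul ((continuous_dM _ _).pow 2)).add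
      ((hψ'c.comp (continuous_gM _)).mul (continuous_d2M _ _))
  have fb : ∀ a, BddFn (f a) := fun a => hb0.comp _
  have f1b : ∀ a e, BddFn fun x => f1 a x e := fun a e => (hb1.comp _).mul (bdd_dM _ _)
  have f2b : ∀ a e, BddFn fun x => f2 a x e := fun a e => by
    simp only [hf2, pow_two]
    exact ((hb2.comp _).mul ((bdd_dM _ _).mul (bdd_dM _ _))).add ((hb1.comp _).mul (bdd_d2M _ _))
  have fd : ∀ a (x : ℝ → GIdx α β → ℝ) (e : GIdx α β → ℝ) (r : ℝ), HasDerivAt x e r →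
      HasDerivAt (fun r => f a (x r)) (f1 a (x r) e) r := fun a x e r hx =>
    (h1 _).comp r (hasDerivAt_gM (u a) hx)
  have f1d : ∀ a (x : ℝ → GIdx α β → ℝ) (e : GIdx α β → ℝ) (r : ℝ), HasDerivAt x e r →
      HasDerivAt (fun r => f1 a (x r) e) (f2 a (x r) e) r := fun a x e r hx => by
    refine (((h2 _).comp r (hasDerivAt_gM (u a) hx)).mul (hasDerivAt_dM (u a) hx)).congr_deriv ?_
    simp only [hf2, Function.comp]
    ring
  set D1 : GIdx α β → (GIdx α β → ℝ) → ℝ := fun i x =>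
    ∑ a, (∏ b ∈ Finset.univ.erase a, f b x) * f1 a x (Pi.single i 1) with hD1
  set D2 : GIdx α β → (GIdx α β → ℝ) → ℝ := fun i x =>
    ∑ a, ((∑ b ∈ Finset.univ.erase a, (∏ c ∈ (Finset.univ.erase a).erase b, f c x) *
      f1 b x (Pi.single i 1)) * f1 a x (Pi.single i 1) +
      (∏ b ∈ Finset.univ.erase a, f b x) * f2 a x (Pi.single i 1)) with hD2
  have D1b : ∀ i, BddFn (D1 i) := fun i => BddFn.sum _ fun a => (BddFn.prod _ fb).mul (f1b _ _)
  have D2b : ∀ i, BddFn (D2 i) := fun i => BddFn.sum _ fun a =>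
    ((BddFn.sum _ fun b => (BddFn.prod _ fb).mul (f1b _ _)).mul (f1b _ _)).add
      ((BddFn.prod _ fb).mul (f2b _ _))
  choose B1 hB1 using D1b
  choose B2 hB2 using D2b
  have nn1 : ∀ i, 0 ≤ B1 i := fun i => (abs_nonneg _).trans (hB1 i 0)
  have nn2 : ∀ i, 0 ≤ B2 i := fun i => (abs_nonneg _).trans (hB2 i 0)
  have s1 : 0 ≤ ∑ i, B1 i := Finset.sum_nonneg fun i _ => nn1 i
  have s2 : 0 ≤ ∑ i, B2 i := Finset.sum_nonneg fun i _ => nn2 i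
  have eL : ∀ x : GIdx α β → ℝ, (Sum.elim (fun i => x (Sum.inl i)) 0 : GIdx α β → ℝ) =
      fun i => @ite ℝ (i.isLeft = true) (Classical.propDecidable _) (x i) 0 := fun x => by
    funext i
    rcases i with i | i <;> simp
  have eR : ∀ x : GIdx α β → ℝ, (Sum.elim 0 (fun i => x (Sum.inr i)) : GIdx α β → ℝ) =
      fun i => @ite ℝ (i.isLeft = true) (Classical.propDecidable _) 0 (x i) := fun x => by
    funext i
    rcases i with i | i <;> simp
  simp only [eL, eR]
  refine gauss_compare (fun i : GIdx α β => i.isLeft = true) (fun x => ∏ a, f a x) D1 D2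
    (continuous_finsetProd _ fun a _ => fc a)
    (fun i => continuous_finsetSum _ fun a _ =>
      (continuous_finsetProd _ fun b _ => fc b).mul (f1c _ _))
    (fun i => continuous_finsetSum _ fun a _ =>
      ((continuous_finsetSum _ fun b _ =>
        (continuous_finsetProd _ fun c _ => fc c).mul (f1c _ _)).mul (f1c _ _)).add
      ((continuous_finsetProd _ fun b _ => fc b).mul (f2c _ _)))
    (1 + ∑ i, B1 i + ∑ i, B2 i) ?_ ?_ ?_ ?_ ?_ ?_
  · intro x
    rw [abs_of_nonneg (Finset.prod_nonneg fun a _ => h0 _)]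
    have : ∏ a, f a x ≤ 1 := Finset.prod_le_one (fun a _ => h0 _) fun a _ => hle _
    linarith
  · intro i x
    have := Finset.single_le_sum (f := B1) (fun i _ => nn1 i) (Finset.mem_univ i)
    linarith [hB1 i x]
  · intro i x
    have := Finset.single_le_sum (f := B2) (fun i _ => nn2 i) (Finset.mem_univ i)
    linarith [hB2 i x]
  · intro x x' r hx
    refine (HasDerivAt.fun_finsetProd (u := Finset.univ) (f := fun a r => f a (x r))
      fun a _ => fd a x x' r hx).congr_deriv ?_
    simp only [hD1, Finset.mul_sum, smul_eq_mul]
    rw [Finset.sum_comm]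
    refine Finset.sum_congr rfl fun a _ => ?_
    simp only [hf1]
    rw [dM_lin, Finset.mul_sum, Finset.mul_sum]
    exact Finset.sum_congr rfl fun i _ => by ring
  · intro i x s
    have hup : HasDerivAt (fun r => @Function.update _ (fun _ => ℝ)
        (fun a b => Classical.propDecidable (a = b)) x i r) (Pi.single i 1) s := by
      refine hasDerivAt_pi.2 fun j => ?_
      by_cases h : j = i
      · subst h; simpa using hasDerivAt_id' s
      · simpa [h] using hasDerivAt_const s (x j)
    refine HasDerivAt.fun_sum fun a _ => ?_
    have := (HasDerivAt.fun_finsetProd (u := Finset.univ.erase a)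
      (f := fun b r => f b (@Function.update _ (fun _ => ℝ)
        (fun a b => Classical.propDecidable (a = b)) x i r))
      fun b _ => fd b _ _ s hup).fun_mul (f1d a _ _ s hup)
    simpa only [smul_eq_mul] using this
  · intro x
    have hsg : ∀ i : GIdx α β,
        (@ite ℝ (i.isLeft = true) (Classical.propDecidable _) 1 (-1)) = gSign i := fun i => by
      rcases i with i | i <;> simp [gSign]
    simp only [hsg, hD2, Finset.mul_sum]
    rw [Finset.sum_comm]
    refine Finset.sum_nonneg fun a _ => ?_
    have e2 : ∑ i, gSign i * f2 a x (Pi.single i 1) = 0 := by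
      have : ∀ i, gSign i * f2 a x (Pi.single i 1) =
          ψ'' (gM (u a) x) * (gSign i * dM (u a) x (Pi.single i 1) ^ 2) +
          ψ' (gM (u a) x) * (gSign i * d2M (u a) x (Pi.single i 1)) := fun i => by
        simp only [hf2]; ring
      simp only [this, Finset.sum_add_distrib, ← Finset.mul_sum, sum_sign_dM_self _ (hu a),
        sum_sign_d2M _ (hu a), mul_zero, add_zero]
    have e1 : ∀ b, 0 ≤ ∑ i, gSign i * (f1 b x (Pi.single i 1) * f1 a x (Pi.single i 1)) := by
      intro b
      have : ∀ i, gSign i * (f1 b x (Pi.single i 1) * f1 a x (Pi.single i 1)) =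
          (ψ' (gM (u b) x) * ψ' (gM (u a) x)) *
          (gSign i * (dM (u b) x (Pi.single i 1) * dM (u a) x (Pi.single i 1))) := fun i => by
        simp only [hf1]; ring
      simp only [this, ← Finset.mul_sum]
      exact mul_nonneg (mul_nonneg (hp _) (hp _)) (sum_sign_dM_nonneg _ _ (hu b) (hu a) x)
    have : ∑ i, gSign i * ((∑ b ∈ Finset.univ.erase a,
          (∏ c ∈ (Finset.univ.erase a).erase b, f c x) *
          f1 b x (Pi.single i 1)) * f1 a x (Pi.single i 1) +
          (∏ b ∈ Finset.univ.erase a, f b x) * f2 a x (Pi.single i 1)) =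
        ∑ b ∈ Finset.univ.erase a, (∏ c ∈ (Finset.univ.erase a).erase b, f c x) *
          (∑ i, gSign i * (f1 b x (Pi.single i 1) * f1 a x (Pi.single i 1))) +
        (∏ b ∈ Finset.univ.erase a, f b x) * ∑ i, gSign i * f2 a x (Pi.single i 1) := by
      simp only [mul_add, Finset.sum_add_distrib, Finset.mul_sum, Finset.sum_mul]
      congr 1
      · rw [Finset.sum_comm]
        refine Finset.sum_congr rfl fun b _ => Finset.sum_congr rfl fun i _ => ?_
        ring
      · exact Finset.sum_congr rfl fun i _ => by ring
    rw [this, e2, mul_zero, add_zero]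
    exact Finset.sum_nonneg fun b _ =>
      mul_nonneg (Finset.prod_nonneg fun c _ => h0 _) (e1 b)

end Gordon

/-! ### Gordon's inequality and exponential moments -/

lemma stdG_split (ι κ : Type*) [Fintype ι] [Fintype κ] :
    MeasurePreserving (fun x : ι ⊕ κ → ℝ => ((fun i => x (Sum.inl i)), fun j => x (Sum.inr j)))
      (stdG (ι ⊕ κ)) ((stdG ι).prod (stdG κ)) :=
  measurePreserving_sumPiEquivProdPi (fun _ : ι ⊕ κ => gaussianReal 0 1)

/-- Product formula for the Gaussian measure on a disjoint union of coordinates. -/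
lemma lintegral_stdG_mul {ι κ : Type*} [Fintype ι] [Fintype κ] (f : (ι → ℝ) → ENNReal)
    (g : (κ → ℝ) → ENNReal) (hf : Measurable f) (hg : Measurable g) :
    ∫⁻ x, f (fun i => x (Sum.inl i)) * g (fun j => x (Sum.inr j)) ∂stdG (ι ⊕ κ)
      = (∫⁻ x, f x ∂stdG ι) * ∫⁻ x, g x ∂stdG κ := by
  rw [← lintegral_prod_mul hf.aemeasurable hg.aemeasurable, ← (stdG_split ι κ).map_eq,
    lintegral_map (by fun_prop) (stdG_split ι κ).measurable]

lemma lintegral_exp_unit (c : ℝ) :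
    ∫⁻ x : Unit → ℝ, ENNReal.ofReal (Real.exp (-(c * x ()))) ∂stdG Unit
      = ENNReal.ofReal (Real.exp (c ^ 2 / 2)) := by
  have mp := measurePreserving_eval (fun _ : Unit => gaussianReal 0 1) ()
  have h1 : ∫⁻ x : Unit → ℝ, ENNReal.ofReal (Real.exp (-(c * x ()))) ∂stdG Unit
      = ∫⁻ r : ℝ, ENNReal.ofReal (Real.exp (-(c * r))) ∂gaussianReal 0 1 := by
    rw [← mp.map_eq, lintegral_map (by fun_prop) mp.measurable]
    rfl
  have h2 := integrable_exp_mul_gaussianReal (μ := 0) (v := 1) (-c)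
  have h3 := congrFun (mgf_id_gaussianReal (μ := 0) (v := 1)) (-c)
  simp only [mgf, id] at h3
  rw [h1]
  simp only [← neg_mul]
  rw [← ofReal_integral_eq_lintegral_ofReal h2 (ae_of_all _ fun _ => (Real.exp_pos _).le), h3]
  simp

section Gordon
variable {α β υ : Type*} [Fintype α] [Fintype β] [Fintype υ]

/-- The process `|Φ u|₂ + g` on the left block. -/
def gordonL (u : β → ℝ) (x : GIdx α β → ℝ) : ℝ :=
  √(∑ k, (∑ j, u j * x (Sum.inl (Sum.inl (k, j)))) ^ 2) + x (Sum.inl (Sum.inr ()))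

/-- The process `|h|₂ + ⟨w, u⟩` on the right block. -/
def gordonR (u : β → ℝ) (x : GIdx α β → ℝ) : ℝ :=
  √(∑ k, x (Sum.inr (Sum.inl k)) ^ 2) + ∑ j, u j * x (Sum.inr (Sum.inr j))

lemma continuous_gordonL (u : β → ℝ) : Continuous (gordonL (α := α) u) := by
  unfold gordonL; fun_prop

lemma continuous_gordonR (u : β → ℝ) : Continuous (gordonR (α := α) u) := by
  unfold gordonR; fun_prop

lemma gM_left_le (u : β → ℝ) (x : GIdx α β → ℝ) :
    gM u (Sum.elim (fun i => x (Sum.inl i)) 0) ≤ gordonL u x + 1 := by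
  unfold gM gordonL gN
  simp only [gY_apply, gB_apply, Sum.elim_inl, Sum.elim_inr, Pi.zero_apply, add_zero, mul_zero,
    Finset.sum_const_zero]
  set T := ∑ k, (∑ j, u j * x (Sum.inl (Sum.inl (k, j)))) ^ 2 with hT
  have hT0 : 0 ≤ T := Finset.sum_nonneg fun _ _ => sq_nonneg _
  have : √(1 + T) ≤ √T + 1 := by
    rw [Real.sqrt_le_left (by positivity)]
    nlinarith [Real.sq_sqrt hT0, Real.sqrt_nonneg T]
  linarith

lemma le_gM_right (u : β → ℝ) (x : GIdx α β → ℝ) :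
    gordonR u x ≤ gM u (Sum.elim 0 (fun i => x (Sum.inr i))) := by
  unfold gM gordonR gN
  simp only [gY_apply, gB_apply, Sum.elim_inl, Sum.elim_inr, Pi.zero_apply, zero_add, mul_zero,
    Finset.sum_const_zero]
  gcongr
  linarith

/-- Gordon's inequality for finitely many unit vectors. The shift by `2` pays for the smoothing of the
norm (`gM_left_le`) and for the width of the smooth step. -/
lemma gordon_prob (u : υ → β → ℝ) (hu : ∀ a, ∑ j, u a j ^ 2 = 1) (l : ℝ) :
    stdG (GIdx α β) {x | ∃ a, gordonL (u a) x ≤ l}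
      ≤ stdG (GIdx α β) {x | ∃ a, gordonR (u a) x ≤ l + 2} := by
  obtain ⟨ψ, ψ', ψ'', h1, h2, hc, hb1, hb2, hp, h0, hle, hz, ho⟩ := smooth_step
  have hψc : Continuous ψ := continuous_iff_continuousAt.2 fun x => (h1 x).continuousAt
  have key := gordon_smooth (α := α) u hu (fun x => ψ (x - (l + 1))) (fun x => ψ' (x - (l + 1)))
    (fun x => ψ'' (x - (l + 1))) (fun x => (h1 _).comp_sub_const x _)
    (fun x => (h2 _).comp_sub_const x _) (hc.comp (continuous_id.sub continuous_const))
    (hb1.comp _) (hb2.comp _) (fun _ => hp _) (fun _ => h0 _) (fun _ => hle _)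
  set A : Set (GIdx α β → ℝ) := {x | ∃ a, gordonL (u a) x ≤ l} with hA
  set B : Set (GIdx α β → ℝ) := {x | ∃ a, gordonR (u a) x ≤ l + 2} with hB
  have mA : MeasurableSet A := by
    rw [hA, Set.ofPred_exists]
    exact MeasurableSet.iUnion fun a =>
      (isClosed_le (continuous_gordonL _) continuous_const).measurableSet
  have mB : MeasurableSet B := by
    rw [hB, Set.ofPred_exists]
    exact MeasurableSet.iUnion fun a =>
      (isClosed_le (continuous_gordonR _) continuous_const).measurableSet
  have cL : Continuous fun x : GIdx α β → ℝ =>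
      (Sum.elim (fun i => x (Sum.inl i)) 0 : GIdx α β → ℝ) :=
    continuous_pi fun i => by rcases i with i | i <;> simp <;> fun_prop
  have cR : Continuous fun x : GIdx α β → ℝ =>
      (Sum.elim 0 (fun i => x (Sum.inr i)) : GIdx α β → ℝ) :=
    continuous_pi fun i => by rcases i with i | i <;> simp <;> fun_prop
  have iL : Integrable (fun x : GIdx α β → ℝ =>
      ∏ a, ψ (gM (u a) (Sum.elim (fun i => x (Sum.inl i)) 0) - (l + 1))) (stdG (GIdx α β)) := by
    refine Integrable.of_bound (C := 1) (Continuous.aestronglyMeasurable ?_) (ae_of_all _ fun x => ?_)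
    · exact continuous_finsetProd _ fun a _ =>
        hψc.comp (((continuous_gM _).comp cL).sub continuous_const)
    · rw [Real.norm_eq_abs, abs_of_nonneg (Finset.prod_nonneg fun a _ => h0 _)]
      exact Finset.prod_le_one (fun a _ => h0 _) fun a _ => hle _
  have iR : Integrable (fun x : GIdx α β → ℝ =>
      ∏ a, ψ (gM (u a) (Sum.elim 0 (fun i => x (Sum.inr i))) - (l + 1))) (stdG (GIdx α β)) := by
    refine Integrable.of_bound (C := 1) (Continuous.aestronglyMeasurable ?_) (ae_of_all _ fun x => ?_)
    · exact continuous_finsetProd _ fun a _ =>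
        hψc.comp (((continuous_gM _).comp cR).sub continuous_const)
    · rw [Real.norm_eq_abs, abs_of_nonneg (Finset.prod_nonneg fun a _ => h0 _)]
      exact Finset.prod_le_one (fun a _ => h0 _) fun a _ => hle _
  have hup : ∫ x, ∏ a, ψ (gM (u a) (Sum.elim (fun i => x (Sum.inl i)) 0) - (l + 1))
      ∂stdG (GIdx α β) ≤ (stdG (GIdx α β)).real Aᶜ := by
    rw [← integral_indicator_one mA.compl]
    refine integral_mono iL ((integrable_const (1 : ℝ)).indicator mA.compl) fun x => ?_
    by_cases hx : x ∈ A
    · obtain ⟨a, ha⟩ := hx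
      have : x ∉ Aᶜ := fun h => h ⟨a, ha⟩
      rw [Set.indicator_of_notMem this]
      refine (Finset.prod_eq_zero (Finset.mem_univ a) (hz _ ?_)).le
      linarith [gM_left_le (u a) x]
    · rw [Set.indicator_of_mem hx]
      exact Finset.prod_le_one (fun a _ => h0 _) fun a _ => hle _
  have hlo : (stdG (GIdx α β)).real Bᶜ ≤
      ∫ x, ∏ a, ψ (gM (u a) (Sum.elim 0 (fun i => x (Sum.inr i))) - (l + 1))
      ∂stdG (GIdx α β) := by
    rw [← integral_indicator_one mB.compl]
    refine integral_mono ((integrable_const (1 : ℝ)).indicator mB.compl) iR fun x => ?_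
    by_cases hx : x ∈ B
    · have : x ∉ Bᶜ := fun h => h hx
      rw [Set.indicator_of_notMem this]
      exact Finset.prod_nonneg fun a _ => h0 _
    · rw [Set.indicator_of_mem hx]
      refine (Finset.prod_eq_one fun a _ => ho _ ?_).ge
      have : ¬ gordonR (u a) x ≤ l + 2 := fun h => hx ⟨a, h⟩
      linarith [le_gM_right (u a) x, not_le.1 this]
  have h := hlo.trans (key.trans hup)
  rw [probReal_compl_eq_one_sub mA, probReal_compl_eq_one_sub mB] at h
  rw [← ENNReal.toReal_le_toReal (measure_ne_top _ _) (measure_ne_top _ _)]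
  exact (by linarith : (stdG (GIdx α β)).real A ≤ (stdG (GIdx α β)).real B)

/-- Exponential-moment form of Gordon's inequality, by the layer-cake formula. -/
lemma gordon_exp [Nonempty υ] (u : υ → β → ℝ) (hu : ∀ a, ∑ j, u a j ^ 2 = 1) (c : ℝ) (hc : 0 < c) :
    ∫⁻ x, ENNReal.ofReal (⨆ a, Real.exp (-(c * gordonL (u a) x))) ∂stdG (GIdx α β)
      ≤ ∫⁻ x, ENNReal.ofReal (⨆ a, Real.exp (-(c * (gordonR (u a) x - 2)))) ∂stdG (GIdx α β) := by
  have hs : ∀ (f : υ → ℝ) (s : ℝ), s ≤ ⨆ a, f a ↔ ∃ a, s ≤ f a := by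
    intro f s
    constructor
    · intro h
      obtain ⟨a, ha⟩ := exists_eq_ciSup_of_finite (f := f)
      exact ⟨a, by rw [ha]; exact h⟩
    · rintro ⟨a, ha⟩
      exact ha.trans (le_ciSup (Set.finite_range f).bddAbove a)
  have mL : Measurable fun x : GIdx α β → ℝ => ⨆ a, Real.exp (-(c * gordonL (u a) x)) :=
    Measurable.iSup fun a => by
      have := (continuous_gordonL (α := α) (u a)).measurable
      fun_prop
  have mR : Measurable fun x : GIdx α β → ℝ => ⨆ a, Real.exp (-(c * (gordonR (u a) x - 2))) :=
    Measurable.iSup fun a => by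
      have := (continuous_gordonR (α := α) (u a)).measurable
      fun_prop
  rw [lintegral_eq_lintegral_meas_le _ (ae_of_all _ fun x => Real.iSup_nonneg fun a =>
      (Real.exp_pos _).le) mL.aemeasurable,
    lintegral_eq_lintegral_meas_le _ (ae_of_all _ fun x => Real.iSup_nonneg fun a =>
      (Real.exp_pos _).le) mR.aemeasurable]
  refine setLIntegral_mono' measurableSet_Ioi fun s hs0 => ?_
  have hs0 : 0 < s := hs0
  have he : ∀ r : ℝ, s ≤ Real.exp (-(c * r)) ↔ r ≤ -Real.log s / c := by
    intro r
    rw [← Real.log_le_iff_le_exp hs0, le_div_iff₀ hc]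
    constructor <;> intro h <;> linarith
  simp only [hs, he]
  refine (gordon_prob u hu _).trans (le_of_eq ?_)
  simp only [sub_le_iff_le_add]

/-- Tail bound for the smallest `|Φ u|₂` in terms of the exponential moments of `-|h|₂` and of the
width `sup (-⟨w, u⟩)`, the latter through a majorant `G`. The factor `exp (c² / 2)` on the left is the
exponential moment of the auxiliary scalar `g`. -/
lemma gordon_tail (u : υ → β → ℝ) (hu : ∀ a, ∑ j, u a j ^ 2 = 1) (c : ℝ) (hc : 0 < c) (r : ℝ)
    (G : (β → ℝ) → ℝ) (hG : Measurable G)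
    (hGu : ∀ a w, Real.exp (-(c * ∑ j, u a j * w j)) ≤ G w) :
    stdG (α × β) {Φ | ∃ a, √(∑ k, (∑ j, u a j * Φ (k, j)) ^ 2) ≤ r} *
        ENNReal.ofReal (Real.exp (-(c * r) + c ^ 2 / 2))
      ≤ ENNReal.ofReal (Real.exp (2 * c)) *
        ((∫⁻ h, ENNReal.ofReal (Real.exp (-(c * √(∑ k, h k ^ 2)))) ∂stdG α) *
          ∫⁻ w, ENNReal.ofReal (G w) ∂stdG β) := by
  rcases isEmpty_or_nonempty υ with hυ | hυ
  · simp
  set S : Set (α × β → ℝ) := {Φ | ∃ a, √(∑ k, (∑ j, u a j * Φ (k, j)) ^ 2) ≤ r} with hS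
  have mS : MeasurableSet S := by
    rw [hS, Set.ofPred_exists]
    exact MeasurableSet.iUnion fun a =>
      (isClosed_le (by fun_prop) continuous_const).measurableSet
  have hL : stdG (α × β) S * ENNReal.ofReal (Real.exp (-(c * r) + c ^ 2 / 2)) ≤
      ∫⁻ x, ENNReal.ofReal (⨆ a, Real.exp (-(c * gordonL (u a) x))) ∂stdG (GIdx α β) := by
    have e1 : stdG (α × β) S * ENNReal.ofReal (Real.exp (-(c * r) + c ^ 2 / 2)) =
        ∫⁻ x : GIdx α β → ℝ, (S.indicator (fun _ => ENNReal.ofReal (Real.exp (-(c * r))))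
          (fun p => x (Sum.inl (Sum.inl p))) *
          ENNReal.ofReal (Real.exp (-(c * x (Sum.inl (Sum.inr ())))))) * 1 ∂stdG (GIdx α β) := by
      rw [lintegral_stdG_mul (κ := α ⊕ β) (fun y : (α × β) ⊕ Unit → ℝ =>
        (S.indicator (fun _ => ENNReal.ofReal (Real.exp (-(c * r)))) (fun p => y (Sum.inl p)) *
          ENNReal.ofReal (Real.exp (-(c * y (Sum.inr ())))))) (fun _ => 1) ?_ measurable_const,
        lintegral_stdG_mul (κ := Unit) (S.indicator (fun _ => ENNReal.ofReal (Real.exp (-(c * r)))))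
          (fun y => ENNReal.ofReal (Real.exp (-(c * y ()))))
          (measurable_const.indicator mS) (by fun_prop), lintegral_exp_unit,
        lintegral_indicator_const mS, lintegral_one, measure_univ, mul_one, Real.exp_add,
        ENNReal.ofReal_mul (Real.exp_pos _).le]
      · ring
      · refine Measurable.mul ?_ (by fun_prop)
        exact (measurable_const.indicator mS).comp (by fun_prop)
    rw [e1]
    refine lintegral_mono fun x => ?_
    rw [mul_one]
    by_cases hx : (fun p => x (Sum.inl (Sum.inl p))) ∈ S
    · rw [Set.indicator_of_mem hx, ← ENNReal.ofReal_mul (Real.exp_pos _).le, ← Real.exp_add]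
      obtain ⟨a, ha⟩ := hx
      refine ENNReal.ofReal_le_ofReal (le_trans ?_ (le_ciSup (Set.finite_range _).bddAbove a))
      rw [Real.exp_le_exp]
      unfold gordonL
      have := mul_le_mul_of_nonneg_left ha hc.le
      linarith
    · rw [Set.indicator_of_notMem hx, zero_mul]
      exact zero_le
  refine hL.trans ((gordon_exp u hu c hc).trans ?_)
  have e2 : ENNReal.ofReal (Real.exp (2 * c)) *
        ((∫⁻ h, ENNReal.ofReal (Real.exp (-(c * √(∑ k, h k ^ 2)))) ∂stdG α) *
          ∫⁻ w, ENNReal.ofReal (G w) ∂stdG β) =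
      ∫⁻ x : GIdx α β → ℝ, ENNReal.ofReal (Real.exp (2 * c)) *
        (ENNReal.ofReal (Real.exp (-(c * √(∑ k, x (Sum.inr (Sum.inl k)) ^ 2)))) *
          ENNReal.ofReal (G fun j => x (Sum.inr (Sum.inr j)))) ∂stdG (GIdx α β) := by
    rw [lintegral_stdG_mul (ι := (α × β) ⊕ Unit) (κ := α ⊕ β)
      (fun _ => ENNReal.ofReal (Real.exp (2 * c)))
      (fun y => ENNReal.ofReal (Real.exp (-(c * √(∑ k, y (Sum.inl k) ^ 2)))) *
          ENNReal.ofReal (G fun j => y (Sum.inr j))) measurable_const ?_,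
      lintegral_stdG_mul (fun y => ENNReal.ofReal (Real.exp (-(c * √(∑ k, y k ^ 2)))))
        (fun y => ENNReal.ofReal (G y)) (by fun_prop) (by fun_prop), lintegral_const,
      measure_univ, mul_one]
    have : Measurable fun y : α ⊕ β → ℝ => G fun j => y (Sum.inr j) := hG.comp (by fun_prop)
    fun_prop
  rw [e2]
  refine lintegral_mono fun x => ?_
  rw [← ENNReal.ofReal_mul (Real.exp_pos _).le, ← ENNReal.ofReal_mul (Real.exp_pos _).le]
  refine ENNReal.ofReal_le_ofReal (ciSup_le fun a => ?_)
  have : -(c * (gordonR (u a) x - 2)) = 2 * c + (-(c * √(∑ k, x (Sum.inr (Sum.inl k)) ^ 2)) +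
      -(c * ∑ j, u a j * x (Sum.inr (Sum.inr j)))) := by
    unfold gordonR; ring
  rw [this, Real.exp_add, Real.exp_add]
  have := hGu a fun j => x (Sum.inr (Sum.inr j))
  gcongr

end Gordon

/-! ### Moments of the Gaussian norm and of the cone width -/

lemma lintegral_stdG_prod {ι : Type*} [Fintype ι] (f : ι → ℝ → ENNReal)
    (hf : ∀ i, Measurable (f i)) :
    ∫⁻ x, ∏ i, f i (x i) ∂stdG ι = ∏ i, ∫⁻ r, f i r ∂gaussianReal 0 1 := by
  have hi : iIndepFun (fun i (x : ι → ℝ) => f i (x i)) (stdG ι) :=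
    iIndepFun_pi (μ := fun _ : ι => gaussianReal 0 1) fun i => (hf i).aemeasurable
  rw [lintegral_prod_eq_prod_lintegral_of_indepFun Finset.univ _ hi
    fun i => (hf i).comp (measurable_pi_apply i)]
  refine Finset.prod_congr rfl fun i _ => ?_
  have mp := measurePreserving_eval (fun _ : ι => gaussianReal 0 1) i
  rw [← mp.map_eq, lintegral_map (hf i) mp.measurable]
  rfl

lemma lintegral_gaussian_std (f : ℝ → ENNReal) (hf : Measurable f) :
    ∫⁻ x, f x ∂gaussianReal 0 1 = ∫⁻ x, gaussianPDF 0 1 x * f x := by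
  rw [gaussianReal_of_var_ne_zero _ one_ne_zero,
    lintegral_withDensity_eq_lintegral_mul _ (measurable_gaussianPDF _ _) hf]
  rfl

lemma gaussianPDF_mul_exp (a x : ℝ) :
    gaussianPDF 0 1 x * ENNReal.ofReal (Real.exp (a * x ^ 2)) =
      ENNReal.ofReal ((√(2 * Real.pi))⁻¹ * Real.exp (-((1 - 2 * a) / 2) * x ^ 2)) := by
  rw [gaussianPDF_def, ← ENNReal.ofReal_mul (gaussianPDFReal_nonneg _ _ _), gaussianPDFReal_def]
  congr 1
  simp only [NNReal.coe_one, mul_one, sub_zero]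
  rw [mul_assoc, ← Real.exp_add]
  congr 2
  ring

lemma lintegral_pdf_mul_exp (a : ℝ) (ha : a < 1 / 2) :
    ∫⁻ x, gaussianPDF 0 1 x * ENNReal.ofReal (Real.exp (a * x ^ 2)) =
      ENNReal.ofReal (1 / √(1 - 2 * a)) := by
  have hp : 0 < (1 - 2 * a) / 2 := by linarith
  simp only [gaussianPDF_mul_exp]
  rw [← ofReal_integral_eq_lintegral_ofReal ((integrable_exp_neg_mul_sq hp).const_mul _)
    (ae_of_all _ fun _ => by positivity), integral_const_mul, integral_gaussian]
  congr 1
  have h1 : (Real.pi / ((1 - 2 * a) / 2)) = (2 * Real.pi) / (1 - 2 * a) := by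
    field_simp
  have : 0 < √(2 * Real.pi) := Real.sqrt_pos.2 (by positivity)
  rw [h1, Real.sqrt_div (by positivity)]
  field_simp

/-- `E exp (a g²) = (1 - 2 a)^{-1/2}`. -/
lemma lintegral_exp_sq (a : ℝ) (ha : a < 1 / 2) :
    ∫⁻ x, ENNReal.ofReal (Real.exp (a * x ^ 2)) ∂gaussianReal 0 1 =
      ENNReal.ofReal (1 / √(1 - 2 * a)) := by
  rw [lintegral_gaussian_std _ (by fun_prop), lintegral_pdf_mul_exp a ha]

/-- Exponential moment of the squared soft-thresholded Gaussian: beyond the threshold, the density at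
`y + κ` is at most `exp (-κ² / 2)` times the density at `y`. -/
lemma lintegral_exp_soft (a κ : ℝ) (ha : a < 1 / 2) (hκ : 0 ≤ κ) :
    ∫⁻ x, ENNReal.ofReal (Real.exp (a * (max (|x| - κ) 0) ^ 2)) ∂gaussianReal 0 1 ≤
      ENNReal.ofReal (1 + 2 * Real.exp (-κ ^ 2 / 2) * (1 / √(1 - 2 * a))) := by
  set q : ℝ → ENNReal := fun y => gaussianPDF 0 1 y * ENNReal.ofReal (Real.exp (a * y ^ 2)) with hq
  have mq : Measurable q := by
    have := measurable_gaussianPDF 0 1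
    fun_prop
  have hshift : ∀ y : ℝ, 0 ≤ y → gaussianPDF 0 1 (y + κ) ≤
      ENNReal.ofReal (Real.exp (-κ ^ 2 / 2)) * gaussianPDF 0 1 y := by
    intro y hy
    rw [gaussianPDF_def, ← ENNReal.ofReal_mul (Real.exp_pos _).le]
    refine ENNReal.ofReal_le_ofReal ?_
    rw [gaussianPDFReal_def, mul_left_comm, ← Real.exp_add]
    refine mul_le_mul_of_nonneg_left (Real.exp_le_exp.2 ?_) (by positivity)
    simp only [NNReal.coe_one, mul_one, sub_zero]
    nlinarith [mul_nonneg hy hκ]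
  have hsymm : ∀ y : ℝ, gaussianPDF 0 1 (-y) = gaussianPDF 0 1 y := by
    intro y
    simp [gaussianPDF_def, gaussianPDFReal_def]
  have hpt : ∀ x : ℝ, gaussianPDF 0 1 x *
      ENNReal.ofReal (Real.exp (a * (max (|x| - κ) 0) ^ 2)) ≤
      gaussianPDF 0 1 x + ENNReal.ofReal (Real.exp (-κ ^ 2 / 2)) * (q (x - κ) + q (-x - κ)) := by
    intro x
    rcases le_total (|x| - κ) 0 with h | h
    · rw [max_eq_right h]
      simp
    · rw [max_eq_left h]
      refine le_trans ?_ le_add_self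
      have h1 : gaussianPDF 0 1 x ≤
          ENNReal.ofReal (Real.exp (-κ ^ 2 / 2)) * gaussianPDF 0 1 (|x| - κ) := by
        have h2 := hshift (|x| - κ) h
        rw [sub_add_cancel] at h2
        rcases abs_choice x with h3 | h3
        · rwa [h3] at h2 ⊢
        · rw [h3, hsymm] at h2
          rwa [h3]
      refine (mul_le_mul_left h1 _).trans ?_
      rw [mul_assoc]
      refine mul_le_mul_right ?_ _
      rcases abs_choice x with h3 | h3
      · rw [h3]; exact le_self_add
      · rw [h3]; exact le_add_self
  rw [lintegral_gaussian_std _ (by fun_prop)]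
  refine (lintegral_mono hpt).trans (le_of_eq ?_)
  have m1 : Measurable fun x => q (x - κ) := mq.comp (by fun_prop)
  have m2 : Measurable fun x => q (-x - κ) := mq.comp (by fun_prop)
  have i1 : ∫⁻ x, q (x - κ) = ENNReal.ofReal (1 / √(1 - 2 * a)) := by
    rw [lintegral_sub_right_eq_self q κ]
    exact lintegral_pdf_mul_exp a ha
  have i2 : ∫⁻ x, q (-x - κ) = ENNReal.ofReal (1 / √(1 - 2 * a)) := by
    rw [← i1]
    exact (Measure.measurePreserving_neg volume).lintegral_comp m1
  rw [lintegral_add_left (measurable_gaussianPDF _ _), lintegral_const_mul _ (by fun_prop),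
    lintegral_add_left m1, i1, i2, lintegral_gaussianPDF_eq_one _ one_ne_zero,
    ← ENNReal.ofReal_add (by positivity) (by positivity),
    ← ENNReal.ofReal_mul (by positivity), ← ENNReal.ofReal_one,
    ← ENNReal.ofReal_add (by positivity) (by positivity)]
  congr 1
  ring

/-- Exponential moment of `-|h|₂` for a standard Gaussian vector `h` in dimension `M²`. -/
lemma chi_moment {α : Type*} [Fintype α] (M c : ℝ) (hM : M ^ 2 = Fintype.card α)
    (hc : 0 < c) (hcM : c ≤ M) :
    ∫⁻ h, ENNReal.ofReal (Real.exp (-(c * √(∑ k, h k ^ 2)))) ∂stdG α ≤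
      ENNReal.ofReal (2 * Real.exp (-(c * M) + c ^ 2 / 2)) := by
  have hM0 : 0 < M := hc.trans_le hcM
  have hd : 0 < M - c / 2 := by linarith
  -- Above the level `M - c / 2` the norm is controlled directly. Below it `c r ≥ θ r²`, and the
  -- Gaussian integral of `exp (-θ r²)` is explicit.
  set θ : ℝ := c / (M - c / 2) with hθ
  have hθ0 : 0 < θ := div_pos hc hd
  have hθd : θ * (M - c / 2) = c := div_mul_cancel₀ _ hd.ne'
  have hpt : ∀ h : α → ℝ, Real.exp (-(c * √(∑ k, h k ^ 2))) ≤
      Real.exp (-(c * M) + c ^ 2 / 2) + ∏ k, Real.exp (-θ * h k ^ 2) := by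
    intro h
    rw [← Real.exp_sum, ← Finset.mul_sum]
    set T := ∑ k, h k ^ 2 with hT
    have hT0 : 0 ≤ T := Finset.sum_nonneg fun _ _ => sq_nonneg _
    have hsq := Real.sq_sqrt hT0
    have hs0 := Real.sqrt_nonneg T
    rcases le_total (M - c / 2) (√T) with h1 | h1
    · have : Real.exp (-(c * √T)) ≤ Real.exp (-(c * M) + c ^ 2 / 2) := by
        rw [Real.exp_le_exp]
        nlinarith
      linarith [Real.exp_pos (-θ * T)]
    · have : Real.exp (-(c * √T)) ≤ Real.exp (-θ * T) := by
        rw [Real.exp_le_exp]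
        have := mul_le_mul_of_nonneg_left h1 (mul_nonneg hθ0.le hs0)
        have e : θ * √T * √T = θ * T := by rw [mul_assoc, ← pow_two, hsq]
        have e' : θ * √T * (M - c / 2) = c * √T := by rw [mul_right_comm, hθd]
        linarith
      linarith [Real.exp_pos (-(c * M) + c ^ 2 / 2)]
  have hfin : (1 / √(1 - 2 * (-θ))) ^ Fintype.card α ≤ Real.exp (-(c * M) + c ^ 2 / 2) := by
    have hp : 0 < 1 + 2 * θ := by linarith
    have e1 : 1 / √(1 - 2 * (-θ)) = Real.exp (-(Real.log (1 + 2 * θ) / 2)) := by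
      rw [Real.exp_neg, ← Real.log_sqrt hp.le, Real.exp_log (Real.sqrt_pos.2 hp), one_div]
      congr 2
      ring
    rw [e1, ← Real.exp_nat_mul, Real.exp_le_exp, ← hM]
    have hl := Real.le_log_one_add_of_nonneg (x := 2 * θ) (by linarith)
    have e2 : 2 * (2 * θ) / (2 * θ + 2) = 2 * c / (M + c / 2) := by
      rw [div_eq_div_iff (by linarith) (by linarith)]
      nlinarith
    rw [e2, div_le_iff₀ (by linarith)] at hl
    have hML : 0 ≤ Real.log (1 + 2 * θ) := Real.log_nonneg (by linarith)
    have hpos : 0 < M + c / 2 := by linarith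
    have : M ^ 2 * (Real.log (1 + 2 * θ) / 2) ≥ c * (M - c / 2) := by
      have h3 : c / (M + c / 2) ≤ Real.log (1 + 2 * θ) / 2 := by
        rw [div_le_iff₀ hpos]; linarith
      have h4 : c * (M - c / 2) ≤ M ^ 2 * (c / (M + c / 2)) := by
        rw [mul_div_assoc', le_div_iff₀ hpos]
        nlinarith [mul_pos hc hc, mul_pos (mul_pos hc hc) hc]
      exact h4.trans (mul_le_mul_of_nonneg_left h3 (sq_nonneg _))
    nlinarith
  calc ∫⁻ h, ENNReal.ofReal (Real.exp (-(c * √(∑ k, h k ^ 2)))) ∂stdG α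
      ≤ ∫⁻ h : α → ℝ, (ENNReal.ofReal (Real.exp (-(c * M) + c ^ 2 / 2)) +
          ∏ k, ENNReal.ofReal (Real.exp (-θ * h k ^ 2))) ∂stdG α := by
        refine lintegral_mono fun h => ?_
        rw [← ENNReal.ofReal_prod_of_nonneg fun _ _ => (Real.exp_pos _).le,
          ← ENNReal.ofReal_add (by positivity) (by positivity)]
        exact ENNReal.ofReal_le_ofReal (hpt h)
    _ = ENNReal.ofReal (Real.exp (-(c * M) + c ^ 2 / 2)) +
          ENNReal.ofReal ((1 / √(1 - 2 * (-θ))) ^ Fintype.card α) := by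
        rw [lintegral_add_left measurable_const, lintegral_const, measure_univ, mul_one,
          lintegral_stdG_prod (fun _ r => ENNReal.ofReal (Real.exp (-θ * r ^ 2)))
            (fun _ => by fun_prop)]
        simp only [lintegral_exp_sq (-θ) (by linarith), Finset.prod_const, Finset.card_univ]
        rw [ENNReal.ofReal_pow (by positivity)]
    _ ≤ _ := by
        rw [← ENNReal.ofReal_add (by positivity) (by positivity)]
        exact ENNReal.ofReal_le_ofReal (by linarith)

/-- A majorant of `exp (-c ⟨w, u⟩)`, uniform over the unit vectors `u` of the cone and a product over
the coordinates of `w`, which are soft-thresholded at level `κ` off `S`. -/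
def widthMaj {β : Type*} [Fintype β] (S : Finset β) (R κ c : ℝ) (w : β → ℝ) : ℝ :=
  Real.exp (c * κ * R + c * (c + R) / 2) *
    ∏ i, Real.exp (c / (2 * (c + R)) * (if i ∈ S then |w i| else max (|w i| - κ) 0) ^ 2)

/-- Off `S` the part of `w` below the threshold is paired with `u` through the `l₁` bound defining the
cone; the rest is handled by Cauchy–Schwarz, and the square root is linearised by
`√T ≤ γ / 2 + T / (2 γ)` with `γ = c + R`. -/
lemma le_widthMaj {β : Type*} [Fintype β] (S : Finset β) (R κ c : ℝ) (hR : 0 < R) (hκ : 0 ≤ κ)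
    (hc : 0 < c) (u : β → ℝ) (hu : ∑ i, u i ^ 2 = 1)
    (hcone : ∑ i ∈ Sᶜ, |u i| ≤ R * √(∑ i ∈ S, u i ^ 2)) (w : β → ℝ) :
    Real.exp (-(c * ∑ i, u i * w i)) ≤ widthMaj S R κ c w := by
  unfold widthMaj
  rw [← Real.exp_sum, ← Real.exp_add, Real.exp_le_exp, ← Finset.mul_sum]
  set q : β → ℝ := fun i => if i ∈ S then |w i| else max (|w i| - κ) 0 with hq
  set T := ∑ i, q i ^ 2 with hT
  have hT0 : 0 ≤ T := Finset.sum_nonneg fun _ _ => sq_nonneg _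
  have h1 : ∀ i, -(u i * w i) ≤ |u i| * q i + (if i ∈ S then 0 else κ * |u i|) := by
    intro i
    have h2 : -(u i * w i) ≤ |u i| * |w i| := by
      rw [← abs_mul]; exact neg_le_abs _
    by_cases hi : i ∈ S
    · simpa [hq, hi] using h2
    · simp only [hq, hi, if_false]
      have := mul_le_mul_of_nonneg_left (le_max_left (|w i| - κ) 0) (abs_nonneg (u i))
      linarith
  have hCS : ∑ i, |u i| * q i ≤ √T := by
    refine Real.le_sqrt_of_sq_le ?_
    have := Finset.sum_mul_sq_le_sq_mul_sq Finset.univ (fun i => |u i|) q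
    simp only [sq_abs, hu, one_mul] at this
    exact this
  have hS1 : √(∑ i ∈ S, u i ^ 2) ≤ 1 := by
    rw [Real.sqrt_le_one, ← hu]
    exact Finset.sum_le_univ_sum_of_nonneg fun _ => sq_nonneg _
  have hcomp : ∑ i, (if i ∈ S then 0 else κ * |u i|) ≤ κ * R := by
    have : ∑ i, (if i ∈ S then 0 else κ * |u i|) = κ * ∑ i ∈ Sᶜ, |u i| := by
      rw [Finset.mul_sum, ← Finset.sum_add_sum_compl S]
      rw [Finset.sum_eq_zero (s := S) (fun i hi => if_pos hi), zero_add]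
      exact Finset.sum_congr rfl fun i hi => if_neg (Finset.mem_compl.1 hi)
    rw [this]
    refine mul_le_mul_of_nonneg_left (hcone.trans ?_) hκ
    simpa using mul_le_mul_of_nonneg_left hS1 hR.le
  have hsum : -∑ i, u i * w i ≤ √T + κ * R := by
    rw [← Finset.sum_neg_distrib]
    refine (Finset.sum_le_sum fun i _ => h1 i).trans ?_
    rw [Finset.sum_add_distrib]
    linarith
  have hγ : 0 < c + R := by linarith
  have hamgm : √T ≤ (c + R) / 2 + T / (2 * (c + R)) := by
    rw [← Real.sq_sqrt hT0, Real.sqrt_sq (Real.sqrt_nonneg _), div_add_div _ _ two_ne_zero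
      (by positivity), le_div_iff₀ (by positivity)]
    nlinarith [sq_nonneg (√T - (c + R))]
  have h3 := mul_le_mul_of_nonneg_left (hsum.trans (add_le_add_left hamgm _)) hc.le
  calc -(c * ∑ i, u i * w i) = c * -∑ i, u i * w i := by ring
    _ ≤ _ := h3
    _ = _ := by ring

lemma measurable_widthMaj {β : Type*} [Fintype β] (S : Finset β) (R κ c : ℝ) :
    Measurable (widthMaj S R κ c) := by
  unfold widthMaj
  refine measurable_const.mul (Finset.measurable_prod _ fun i _ => ?_)
  by_cases hi : i ∈ S <;> simp only [hi, if_true, if_false] <;> fun_prop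

lemma width_moment {β : Type*} [Fintype β] (S : Finset β) (R κ c : ℝ) (hR : 0 < R) (hκ : 0 ≤ κ)
    (hc : 0 < c) (hS : (S.card : ℝ) ≤ R ^ 2)
    (hβ : (Fintype.card β : ℝ) * Real.exp (-κ ^ 2 / 2) ≤ R ^ 2) :
    ∫⁻ w, ENNReal.ofReal (widthMaj S R κ c w) ∂stdG β ≤
      ENNReal.ofReal (Real.exp (c ^ 2 / 2 + c * R * (κ + 2) + 2 * R ^ 2)) := by
  have hγ : 0 < c + R := by linarith
  set a : ℝ := c / (2 * (c + R)) with ha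
  have ha0 : 0 ≤ a := by positivity
  have ha1 : a < 1 / 2 := by
    rw [ha, div_lt_div_iff₀ (by positivity) two_pos]; linarith
  set v : ℝ := 1 / √(1 - 2 * a) with hv
  have hv0 : 0 ≤ v := by positivity
  have hv2 : v ^ 2 = 1 + c / R := by
    rw [hv, div_pow, Real.sq_sqrt (by linarith), ha]
    have h1 : 1 - 2 * (c / (2 * (c + R))) = R / (c + R) := by field_simp; ring
    rw [h1]
    field_simp
    ring
  have hvexp : v ≤ Real.exp (c / R / 2) := by
    refine (sq_le_sq₀ hv0 (Real.exp_pos _).le).1 ?_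
    rw [hv2, ← Real.exp_nat_mul]
    have := Real.add_one_le_exp (c / R)
    have e : ((2 : ℕ) : ℝ) * (c / R / 2) = c / R := by push_cast; ring
    rw [e]
    linarith
  have hv1 : v ≤ 1 + c / (2 * R) := by
    refine (sq_le_sq₀ hv0 (by positivity)).1 ?_
    rw [hv2]
    have e : (1 + c / (2 * R)) ^ 2 = 1 + c / R + (c / (2 * R)) ^ 2 := by field_simp; ring
    rw [e]
    linarith [sq_nonneg (c / (2 * R))]
  have hf : ∀ i : β, ∫⁻ r, ENNReal.ofReal (Real.exp (a * (if i ∈ S then |r| else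
      max (|r| - κ) 0) ^ 2)) ∂gaussianReal 0 1 ≤
      ENNReal.ofReal (Real.exp ((if i ∈ S then c / R / 2 else 0) +
        2 * Real.exp (-κ ^ 2 / 2) * v)) := by
    intro i
    by_cases hi : i ∈ S
    · simp only [hi, if_true, sq_abs]
      rw [lintegral_exp_sq a ha1]
      refine ENNReal.ofReal_le_ofReal (hvexp.trans (Real.exp_le_exp.2 ?_))
      have : 0 ≤ 2 * Real.exp (-κ ^ 2 / 2) * v := by positivity
      linarith
    · simp only [hi, if_false]
      refine (lintegral_exp_soft a κ ha1 hκ).trans (ENNReal.ofReal_le_ofReal ?_)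
      rw [zero_add]
      linarith [Real.add_one_le_exp (2 * Real.exp (-κ ^ 2 / 2) * v)]
  have e1 : ∀ w : β → ℝ, ENNReal.ofReal (widthMaj S R κ c w) =
      ENNReal.ofReal (Real.exp (c * κ * R + c * (c + R) / 2)) *
      ∏ i, ENNReal.ofReal (Real.exp (a * (if i ∈ S then |w i| else max (|w i| - κ) 0) ^ 2)) := by
    intro w
    unfold widthMaj
    rw [ENNReal.ofReal_mul (Real.exp_pos _).le,
      ENNReal.ofReal_prod_of_nonneg fun _ _ => (Real.exp_pos _).le]
  have mf : ∀ i : β, Measurable fun r : ℝ => ENNReal.ofReal (Real.exp (a * (if i ∈ S then |r| else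
      max (|r| - κ) 0) ^ 2)) := by
    intro i
    by_cases hi : i ∈ S <;> simp only [hi, if_true, if_false] <;> fun_prop
  simp only [e1]
  have mp : Measurable fun w : β → ℝ =>
      ∏ i, ENNReal.ofReal (Real.exp (a * (if i ∈ S then |w i| else max (|w i| - κ) 0) ^ 2)) :=
    Finset.measurable_prod _ fun i _ => (mf i).comp (measurable_pi_apply i)
  rw [lintegral_const_mul _ mp, lintegral_stdG_prod _ mf]
  refine (mul_le_mul_right (Finset.prod_le_prod' fun i _ => hf i) _).trans ?_
  rw [← ENNReal.ofReal_prod_of_nonneg fun _ _ => (Real.exp_pos _).le, ← Real.exp_sum,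
    ← ENNReal.ofReal_mul (Real.exp_pos _).le, ← Real.exp_add]
  refine ENNReal.ofReal_le_ofReal (Real.exp_le_exp.2 ?_)
  rw [Finset.sum_add_distrib, Finset.sum_ite_mem, Finset.univ_inter, Finset.sum_const,
    Finset.sum_const, nsmul_eq_mul, nsmul_eq_mul, Finset.card_univ]
  have t1 : (S.card : ℝ) * (c / R / 2) ≤ c * R / 2 := by
    refine (mul_le_mul_of_nonneg_right hS (by positivity)).trans (le_of_eq ?_)
    field_simp
  have t2 : (Fintype.card β : ℝ) * (2 * Real.exp (-κ ^ 2 / 2) * v) ≤ 2 * R ^ 2 + c * R := by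
    calc (Fintype.card β : ℝ) * (2 * Real.exp (-κ ^ 2 / 2) * v)
        = 2 * ((Fintype.card β : ℝ) * Real.exp (-κ ^ 2 / 2)) * v := by ring
      _ ≤ 2 * R ^ 2 * (1 + c / (2 * R)) := by gcongr
      _ = _ := by field_simp
  nlinarith

/-! ### The smallest value of the operator on the cone -/

/-- The Euclidean unit vectors `u` with `|u_{Sᶜ}|₁ ≤ R |u_S|₂`: the cone of possible error
directions. -/
def unitCone {β : Type*} [Fintype β] (S : Finset β) (R : ℝ) : Set (β → ℝ) :=
  {u | ∑ i, u i ^ 2 = 1 ∧ ∑ i ∈ Sᶜ, |u i| ≤ R * √(∑ i ∈ S, u i ^ 2)}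

section Cone
variable {α β : Type*} [Fintype α] [Fintype β]

/-- For finitely many unit vectors of the cone, `|Φ u|₂ ≤ a + 1` for one of them has probability at most
`exp (-t² / 2)`. -/
lemma finite_cone_bound {υ : Type*} [Fintype υ] (S : Finset β) (M R κ t a : ℝ)
    (hM : M ^ 2 = Fintype.card α) (hR : 1 ≤ R) (hκ : 0 ≤ κ) (ht : 0 < t) (ha : 0 ≤ a)
    (hS : (S.card : ℝ) ≤ R ^ 2)
    (hβ : (Fintype.card β : ℝ) * Real.exp (-κ ^ 2 / 2) ≤ R ^ 2)
    (hbig : t + a + R * (κ + 8) ≤ M) (u : υ → β → ℝ) (hu : ∀ b, u b ∈ unitCone S R) :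
    stdG (α × β) {Φ | ∃ b, √(∑ k, (∑ j, u b j * Φ (k, j)) ^ 2) ≤ a + 1} ≤
      ENNReal.ofReal (Real.exp (-t ^ 2 / 2)) := by
  have hR0 : 0 < R := by linarith
  -- The exponent `c² / 2 ≥ t² / 2 + 9 R² / 2` gained below absorbs the `2 R² + 1` lost in the moment
  -- bounds.
  set c : ℝ := t + 3 * R with hc
  have hc0 : 0 < c := by positivity
  have hRκ : 0 ≤ R * κ := by positivity
  have hcM : c ≤ M := by
    have : R * (κ + 8) = R * κ + 8 * R := by ring
    linarith
  have key := gordon_tail (α := α) u (fun b => (hu b).1) c hc0 (a + 1) (widthMaj S R κ c)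
    (measurable_widthMaj S R κ c) fun b w => le_widthMaj S R κ c hR0 hκ hc0 (u b) (hu b).1 (hu b).2 w
  have h1 := chi_moment (α := α) M c hM hc0 hcM
  have h2 := width_moment S R κ c hR0 hκ hc0 hS hβ
  have h3 := key.trans (mul_le_mul_right (mul_le_mul' h1 h2) _)
  rw [← ENNReal.ofReal_mul (by positivity), ← ENNReal.ofReal_mul (by positivity)] at h3
  set Y := Real.exp (-(c * (a + 1)) + c ^ 2 / 2) with hY
  have hY0 : 0 < Y := Real.exp_pos _
  have h4 : Real.exp (2 * c) * (2 * Real.exp (-(c * M) + c ^ 2 / 2) *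
      Real.exp (c ^ 2 / 2 + c * R * (κ + 2) + 2 * R ^ 2)) ≤ Real.exp (-t ^ 2 / 2) * Y := by
    have htwo : (2 : ℝ) ≤ Real.exp 1 := by linarith [Real.add_one_le_exp (1 : ℝ)]
    calc Real.exp (2 * c) * (2 * Real.exp (-(c * M) + c ^ 2 / 2) *
          Real.exp (c ^ 2 / 2 + c * R * (κ + 2) + 2 * R ^ 2))
        ≤ Real.exp (2 * c) * (Real.exp 1 * Real.exp (-(c * M) + c ^ 2 / 2) *
          Real.exp (c ^ 2 / 2 + c * R * (κ + 2) + 2 * R ^ 2)) := by gcongr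
      _ = Real.exp (2 * c + (1 + (-(c * M) + c ^ 2 / 2) +
          (c ^ 2 / 2 + c * R * (κ + 2) + 2 * R ^ 2))) := by simp only [Real.exp_add]
      _ ≤ Real.exp (-t ^ 2 / 2 + (-(c * (a + 1)) + c ^ 2 / 2)) := by
          rw [Real.exp_le_exp]
          have h5 : c ≤ M - (a + 1) - 2 - R * (κ + 2) := by
            have e1 : R * (κ + 8) = R * κ + 8 * R := by ring
            have e2 : R * (κ + 2) = R * κ + 2 * R := by ring
            linarith
          have h6 := mul_le_mul_of_nonneg_left h5 hc0.le
          have h7 : c ^ 2 / 2 = t ^ 2 / 2 + 3 * (t * R) + 9 / 2 * R ^ 2 := by rw [hc]; ring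
          have h8 : 0 ≤ t * R := by positivity
          have h9 : 1 ≤ R ^ 2 := one_le_pow₀ hR
          nlinarith
      _ = _ := by rw [hY, Real.exp_add]
  have h5 := h3.trans (ENNReal.ofReal_le_ofReal h4)
  rw [ENNReal.ofReal_mul (Real.exp_pos _).le] at h5
  exact (ENNReal.mul_le_mul_iff_left (by simpa using hY0) ENNReal.ofReal_ne_top).1 h5

/-- Passage from finite subsets to the whole cone, along a dense sequence; the slack `1` in
`finite_cone_bound` makes room for the approximation. -/
lemma cone_bound (S : Finset β) (M R κ t a : ℝ)
    (hM : M ^ 2 = Fintype.card α) (hR : 1 ≤ R) (hκ : 0 ≤ κ) (ht : 0 < t) (ha : 0 ≤ a)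
    (hS : (S.card : ℝ) ≤ R ^ 2)
    (hβ : (Fintype.card β : ℝ) * Real.exp (-κ ^ 2 / 2) ≤ R ^ 2)
    (hbig : t + a + R * (κ + 8) ≤ M) :
    stdG (α × β) {Φ | ∃ u ∈ unitCone S R, √(∑ k, (∑ j, u j * Φ (k, j)) ^ 2) ≤ a} ≤
      ENNReal.ofReal (Real.exp (-t ^ 2 / 2)) := by
  rcases isEmpty_or_nonempty (unitCone S R) with hK | hK
  · have : {Φ : α × β → ℝ | ∃ u ∈ unitCone S R, √(∑ k, (∑ j, u j * Φ (k, j)) ^ 2) ≤ a} = ∅ := by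
      ext Φ
      simp only [Set.mem_ofPred_eq, Set.mem_empty_iff_false, iff_false, not_exists, not_and]
      intro u hu
      exact (hK.false ⟨u, hu⟩).elim
    rw [this]
    simp
  set v : ℕ → unitCone S R := TopologicalSpace.denseSeq (unitCone S R) with hv
  set E : ℕ → Set (α × β → ℝ) := fun N =>
    {Φ | ∃ b : Fin N, √(∑ k, (∑ j, (v b : β → ℝ) j * Φ (k, j)) ^ 2) ≤ a + 1} with hE
  have hmono : Monotone E := by
    intro N N' hN Φ hΦ
    obtain ⟨b, hb⟩ := hΦ
    exact ⟨⟨b, b.2.trans_le hN⟩, hb⟩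
  have hsub : {Φ : α × β → ℝ | ∃ u ∈ unitCone S R, √(∑ k, (∑ j, u j * Φ (k, j)) ^ 2) ≤ a} ⊆
      ⋃ N, E N := by
    rintro Φ ⟨u, hu, hle⟩
    have hcont : Continuous fun w : β → ℝ => √(∑ k, (∑ j, w j * Φ (k, j)) ^ 2) := by fun_prop
    have hopen : IsOpen {w : unitCone S R |
        √(∑ k, (∑ j, (w : β → ℝ) j * Φ (k, j)) ^ 2) < a + 1} :=
      isOpen_lt (hcont.comp continuous_subtype_val) continuous_const
    obtain ⟨N, hN⟩ := (TopologicalSpace.denseRange_denseSeq (unitCone S R)).exists_mem_open hopen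
      ⟨⟨u, hu⟩, by simp only [Set.mem_ofPred_eq]; linarith⟩
    exact Set.mem_iUnion.2 ⟨N + 1, ⟨⟨N, N.lt_succ_self⟩, le_of_lt hN⟩⟩
  refine (measure_mono hsub).trans ?_
  rw [hmono.measure_iUnion]
  exact iSup_le fun N => finite_cone_bound S M R κ t a hM hR hκ ht ha hS hβ hbig
    (fun b : Fin N => (v b : β → ℝ)) fun b => (v b).2

end Cone

/-! ### Reduction of the reconstruction problem to the cone -/

/-- `gaussOp` is the standard Gaussian measure on the index set `Fin m × (Fin n × Fin n)`. -/
lemma uncurry_measurePreserving (m n : ℕ) :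
    MeasurePreserving (fun (ω : Fin m → Fin n → Fin n → ℝ) (p : Fin m × (Fin n × Fin n)) =>
      ω p.1 p.2.1 p.2.2) (gaussOp m n) (stdG (Fin m × (Fin n × Fin n))) := by
  have hmeas : Measurable (fun (ω : Fin m → Fin n → Fin n → ℝ) (p : Fin m × (Fin n × Fin n)) =>
      ω p.1 p.2.1 p.2.2) := by fun_prop
  refine ⟨hmeas, ?_⟩
  unfold stdG
  refine (Measure.pi_eq fun s hs => ?_).symm
  rw [Measure.map_apply hmeas (MeasurableSet.univ_pi hs)]
  have hpre : (fun (ω : Fin m → Fin n → Fin n → ℝ) (p : Fin m × (Fin n × Fin n)) =>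
      ω p.1 p.2.1 p.2.2) ⁻¹' Set.univ.pi s =
      Set.univ.pi fun k => Set.univ.pi fun i => Set.univ.pi fun j => s (k, (i, j)) := by
    ext ω
    simp [Set.mem_pi]
  rw [hpre, gaussOp, Measure.pi_pi]
  simp_rw [Measure.pi_pi, Fintype.prod_prod_type]

instance gaussOp_prob (m n : ℕ) : IsProbabilityMeasure (gaussOp m n) := by
  unfold gaussOp; infer_instance

lemma support_card_le {n s : ℕ} (X : Matrix (Fin n) (Fin n) ℝ) (hX : ColSparse s X) :
    (Finset.univ.filter fun p : Fin n × Fin n => X p.1 p.2 ≠ 0).card ≤ n * s := by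
  have h : (Finset.univ.filter fun p : Fin n × Fin n => X p.1 p.2 ≠ 0).card =
      ∑ j, ((Finset.univ : Finset (Fin n)).filter fun i => X i j ≠ 0).card := by
    simp_rw [Finset.card_filter]
    rw [Fintype.sum_prod_type, Finset.sum_comm]
  rw [h]
  exact (Finset.sum_le_sum fun j _ => hX j).trans (by simp)

/-- For flat `X` the bound on the maximal column norm bounds every column of `Z` by the corresponding
column of `X`; summing the columns compares the entrywise `l₁` norms. -/
lemma sum_abs_le_of_mnorm1_le {n : ℕ} (X Z : Matrix (Fin n) (Fin n) ℝ) (hX : Flat X)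
    (h : mnorm1 Z ≤ mnorm1 X) :
    ∑ p : Fin n × Fin n, |Z p.1 p.2| ≤ ∑ p : Fin n × Fin n, |X p.1 p.2| := by
  rw [Fintype.sum_prod_type_right, Fintype.sum_prod_type_right]
  refine Finset.sum_le_sum fun j _ => ?_
  have : Nonempty (Fin n) := ⟨j⟩
  have h1 : colNorm1 Z j ≤ mnorm1 Z := le_ciSup (f := colNorm1 Z) (Set.finite_range _).bddAbove j
  have h2 : mnorm1 X ≤ colNorm1 X j := ciSup_le fun k => (hX k j).le
  exact h1.trans (h.trans h2)

/-- If `z` has no larger `l₁` norm than `x`, the error `z - x` lies in the cone of the support of `x`. -/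
lemma cone_of_sum_abs_le {β : Type*} [Fintype β] (x z : β → ℝ) (R : ℝ) (hR : 0 ≤ R)
    (hS : ((Finset.univ.filter fun i => x i ≠ 0).card : ℝ) ≤ R ^ 2)
    (h : ∑ i, |z i| ≤ ∑ i, |x i|) :
    ∑ i ∈ (Finset.univ.filter fun i => x i ≠ 0)ᶜ, |z i - x i| ≤
      R * √(∑ i ∈ Finset.univ.filter fun i => x i ≠ 0, (z i - x i) ^ 2) := by
  set S := Finset.univ.filter fun i => x i ≠ 0 with hSdef
  have hoff : ∀ i ∈ Sᶜ, x i = 0 := by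
    intro i hi
    simpa [hSdef] using hi
  have h1 : ∑ i ∈ Sᶜ, |z i - x i| = ∑ i ∈ Sᶜ, |z i| :=
    Finset.sum_congr rfl fun i hi => by rw [hoff i hi, sub_zero]
  have h2 : ∑ i ∈ Sᶜ, |x i| = 0 :=
    Finset.sum_eq_zero fun i hi => by rw [hoff i hi, abs_zero]
  have h3 := Finset.sum_add_sum_compl S fun i => |z i|
  have h4 := Finset.sum_add_sum_compl S fun i => |x i|
  have h5 : ∑ i ∈ S, |x i| ≤ ∑ i ∈ S, |z i| + ∑ i ∈ S, |z i - x i| := by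
    rw [← Finset.sum_add_distrib]
    refine Finset.sum_le_sum fun i _ => ?_
    have := abs_sub_abs_le_abs_sub (x i) (z i)
    rw [abs_sub_comm] at this
    linarith
  have h6 : ∑ i ∈ S, |z i - x i| ≤ R * √(∑ i ∈ S, (z i - x i) ^ 2) := by
    have hcs := sq_sum_le_card_mul_sum_sq (s := S) (f := fun i => |z i - x i|)
    simp only [sq_abs] at hcs
    have hnn : 0 ≤ ∑ i ∈ S, (z i - x i) ^ 2 := Finset.sum_nonneg fun i _ => sq_nonneg _
    refine (Real.le_sqrt_of_sq_le (hcs.trans (mul_le_mul_of_nonneg_right hS hnn))).trans ?_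
    rw [Real.sqrt_mul (sq_nonneg R), Real.sqrt_sq hR]
  linarith

lemma vnorm2_sub_le {m : ℕ} (x y : Fin m → ℝ) :
    vnorm2 (fun k => x k - y k) ≤ vnorm2 x + vnorm2 y := by
  have h := norm_sub_le (WithLp.toLp 2 x : EuclideanSpace ℝ (Fin m)) (WithLp.toLp 2 y)
  simpa [EuclideanSpace.norm_eq, vnorm2, sq_abs] using h

/-- An error `H = Z - X` of Frobenius norm above `δ` yields, after normalisation, a unit vector of
the cone on which the measurement operator is at most `2η/δ`. -/
lemma exists_unitCone_of_lt_frob {n m s : ℕ} (X Z : Matrix (Fin n) (Fin n) ℝ)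
    (hX : ColSparse s X) (hflat : Flat X) (η δ : ℝ) (hδ : 0 < δ) (hη : 0 ≤ η)
    (ω : Fin m → Fin n → Fin n → ℝ) (e : Fin m → ℝ) (he : vnorm2 e ≤ η)
    (hZ : vnorm2 (fun k => ((∑ i, ∑ j, ω k i j * X i j) + e k) -
      ∑ i, ∑ j, ω k i j * Z i j) ≤ η)
    (hmin : mnorm1 Z ≤ mnorm1 X) (hlt : δ < frob (Z - X)) :
    ∃ u ∈ unitCone (Finset.univ.filter fun p : Fin n × Fin n => X p.1 p.2 ≠ 0) (√(n * s)),
      √(∑ k, (∑ p : Fin n × Fin n, u p * ω k p.1 p.2) ^ 2) ≤ 2 * η / δ := by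
  set F := frob (Z - X) with hF
  have hF0 : 0 < F := hδ.trans hlt
  have hcone := cone_of_sum_abs_le (fun p : Fin n × Fin n => X p.1 p.2) (fun p => Z p.1 p.2)
    (√(n * s)) (Real.sqrt_nonneg _)
    (by rw [Real.sq_sqrt (by positivity)]; exact_mod_cast support_card_le X hX)
    (sum_abs_le_of_mnorm1_le X Z hflat hmin)
  have hF2 : F ^ 2 = ∑ p : Fin n × Fin n, (Z p.1 p.2 - X p.1 p.2) ^ 2 := by
    have hnn : 0 ≤ ∑ i, ∑ j, (Z i j - X i j) ^ 2 :=
      Finset.sum_nonneg fun i _ => Finset.sum_nonneg fun j _ => sq_nonneg _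
    rw [Fintype.sum_prod_type]
    exact Real.sq_sqrt hnn
  refine ⟨fun p => (Z p.1 p.2 - X p.1 p.2) / F, ⟨?_, ?_⟩, ?_⟩
  · simp_rw [div_pow]
    rw [← Finset.sum_div, ← hF2, div_self (by positivity)]
  · simp_rw [div_pow, abs_div, abs_of_pos hF0]
    rw [← Finset.sum_div, ← Finset.sum_div, Real.sqrt_div' _ (sq_nonneg F),
      Real.sqrt_sq hF0.le, ← mul_div_assoc]
    gcongr
  · have h1 : vnorm2 (fun k => e k - (((∑ i, ∑ j, ω k i j * X i j) + e k) -
        ∑ i, ∑ j, ω k i j * Z i j)) ≤ 2 * η := (vnorm2_sub_le _ _).trans (by linarith)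
    have h2 : ∀ k, ∑ p : Fin n × Fin n, (Z p.1 p.2 - X p.1 p.2) / F * ω k p.1 p.2 =
        (e k - (((∑ i, ∑ j, ω k i j * X i j) + e k) - ∑ i, ∑ j, ω k i j * Z i j)) / F := by
      intro k
      have h3 : ∑ p : Fin n × Fin n, (Z p.1 p.2 - X p.1 p.2) / F * ω k p.1 p.2 =
          (∑ p : Fin n × Fin n, (ω k p.1 p.2 * Z p.1 p.2 - ω k p.1 p.2 * X p.1 p.2)) / F := by
        rw [Finset.sum_div]
        exact Finset.sum_congr rfl fun p _ => by ring
      rw [h3, Finset.sum_sub_distrib, Fintype.sum_prod_type, Fintype.sum_prod_type]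
      ring
    simp_rw [h2, div_pow]
    rw [← Finset.sum_div, Real.sqrt_div' _ (sq_nonneg F), Real.sqrt_sq hF0.le]
    calc _ ≤ 2 * η / F := by gcongr; exact h1
      _ ≤ 2 * η / δ := by gcongr

/-- With `κ = √(2 log n)` this is `(κ + 8)² ≤ 3 κ² + 96`, that is, `2 (κ - 4)² ≥ 0`; it fixes the
absolute constant `C = exp 96`. -/
lemma width_le_sqrt_log (n s : ℕ) (hn : 0 < n) :
    √((n : ℝ) * s) * (√(2 * Real.log n) + 8) ≤
      √(n * s * Real.log (Real.exp 96 * (n : ℝ) ^ 6)) := by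
  have hn1 : (1 : ℝ) ≤ n := by exact_mod_cast hn
  have hlog : 0 ≤ Real.log n := Real.log_nonneg hn1
  have hκ2 : √(2 * Real.log n) ^ 2 = 2 * Real.log n := Real.sq_sqrt (by positivity)
  rw [Real.sqrt_mul (by positivity : (0 : ℝ) ≤ (n : ℝ) * s)]
  refine mul_le_mul_of_nonneg_left (Real.le_sqrt_of_sq_le ?_) (Real.sqrt_nonneg _)
  rw [Real.log_mul (Real.exp_pos _).ne' (by positivity), Real.log_exp, Real.log_pow]
  push_cast
  nlinarith [sq_nonneg (√(2 * Real.log n) - 4)]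

/-- number of Gaussian measurements for robust reconstruction
(Theorem 5.1). -/
theorem gaussian_measurements_robust_reconstruction :
    ∃ C : ℝ, 0 < C ∧ ∀ n m s : ℕ, 0 < n → 0 < s →
      ∀ X : Matrix (Fin n) (Fin n) ℝ, ColSparse s X → Flat X →
      ∀ η δ t : ℝ, 0 ≤ η → 0 < δ → 0 < t →
      ∀ e : (Fin m → Fin n → Fin n → ℝ) → (Fin m → ℝ), (∀ ω, vnorm2 (e ω) ≤ η) →
      ∀ Xs : (Fin m → Fin n → Fin n → ℝ) → Matrix (Fin n) (Fin n) ℝ,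
        -- X* ω is a minimizer of inf ‖Z‖₁ s.t. |y − Φ(Z)|₂ ≤ η, where y = Φ(X) + e
        (∀ ω, vnorm2 (fun k => ((∑ i, ∑ j, ω k i j * X i j) + e ω k)
                  - ∑ i, ∑ j, ω k i j * Xs ω i j) ≤ η) →
        (∀ ω, ∀ Z : Matrix (Fin n) (Fin n) ℝ,
            vnorm2 (fun k => ((∑ i, ∑ j, ω k i j * X i j) + e ω k)
                  - ∑ i, ∑ j, ω k i j * Z i j) ≤ η →
            mnorm1 (Xs ω) ≤ mnorm1 Z) →
        (m : ℝ) ≥ (t + 2 * η / δ + Real.sqrt (n * s * Real.log (C * n^6)))^2 →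
        ENNReal.ofReal (1 - Real.exp (-t^2 / 2))
          ≤ gaussOp m n {ω | frob (Xs ω - X) ≤ δ} := by
  refine ⟨Real.exp 96, Real.exp_pos _, ?_⟩
  intro n m s hn hs X hX hflat η δ t hη hδ ht e he Xs hfeas hmin hm
  have hn1 : (1 : ℝ) ≤ n := by exact_mod_cast hn
  have hs1 : (1 : ℝ) ≤ s := by exact_mod_cast hs
  have hns : (1 : ℝ) ≤ n * s := by nlinarith
  have hlog : 0 ≤ Real.log n := Real.log_nonneg hn1
  set S := Finset.univ.filter fun p : Fin n × Fin n => X p.1 p.2 ≠ 0 with hS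
  set B : Set (Fin m × (Fin n × Fin n) → ℝ) :=
    {Φ | ∃ u ∈ unitCone S (√(n * s)), √(∑ k, (∑ p, u p * Φ (k, p)) ^ 2) ≤ 2 * η / δ} with hB
  have hBle : stdG (Fin m × (Fin n × Fin n)) B ≤ ENNReal.ofReal (Real.exp (-t ^ 2 / 2)) := by
    refine cone_bound S (√m) (√(n * s)) (√(2 * Real.log n)) t (2 * η / δ)
      (by rw [Real.sq_sqrt (by positivity)]; simp) (Real.one_le_sqrt.2 hns) (Real.sqrt_nonneg _)
      ht (by positivity) ?_ ?_ ?_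
    · rw [Real.sq_sqrt (by positivity)]
      exact_mod_cast support_card_le X hX
    · rw [neg_div, Real.sq_sqrt (by positivity), Real.sq_sqrt (by positivity),
        mul_div_cancel_left₀ _ (two_ne_zero), Real.exp_neg, Real.exp_log (by linarith)]
      simp only [Fintype.card_prod, Fintype.card_fin, Nat.cast_mul]
      rw [mul_assoc, mul_inv_cancel₀ (by positivity)]
      gcongr
    · refine le_trans ?_ (Real.le_sqrt_of_sq_le hm)
      gcongr
      exact width_le_sqrt_log n s hn
  have hmp := uncurry_measurePreserving m n
  -- Neither the bad set nor the target event is assumed measurable, hence the measurable hull.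
  set T := toMeasurable (stdG (Fin m × (Fin n × Fin n))) B with hT
  have hTm : MeasurableSet T := measurableSet_toMeasurable _ _
  set U : (Fin m → Fin n → Fin n → ℝ) → (Fin m × (Fin n × Fin n) → ℝ) :=
    fun ω p => ω p.1 p.2.1 p.2.2 with hU
  have hpre : gaussOp m n (U ⁻¹' T) ≤ ENNReal.ofReal (Real.exp (-t ^ 2 / 2)) := by
    rw [hmp.measure_preimage hTm.nullMeasurableSet, hT, measure_toMeasurable]
    exact hBle
  have hsub : (U ⁻¹' T)ᶜ ⊆ {ω | frob (Xs ω - X) ≤ δ} := by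
    intro ω hω
    by_contra hlt
    refine hω (subset_toMeasurable _ _ ?_)
    refine exists_unitCone_of_lt_frob X (Xs ω) hX hflat η δ hδ hη ω (e ω) (he ω) (hfeas ω)
      (hmin ω X ?_) (not_le.1 hlt)
    simpa using he ω
  calc ENNReal.ofReal (1 - Real.exp (-t ^ 2 / 2))
      = 1 - ENNReal.ofReal (Real.exp (-t ^ 2 / 2)) := by
        rw [ENNReal.ofReal_sub _ (Real.exp_pos _).le, ENNReal.ofReal_one]
    _ ≤ 1 - gaussOp m n (U ⁻¹' T) := tsub_le_tsub_left hpre 1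
    _ = gaussOp m n (U ⁻¹' T)ᶜ := (prob_compl_eq_one_sub (hmp.measurable hTm)).symm
    _ ≤ _ := measure_mono hsub

end
end

section
/- There are absolute constants C₁, C₂ > 0 (one may take C₁ = 1/(2 log 3), C₂ = 1/4) such that for any linear operator Φ : ℝ^{n×n} → ℝ^m and any positive integer s < n: if every matrix X = (x_1, …, x_n) with all columns 2s-sparse is the unique minimizer of inf ‖Z‖₁ subject to Φ(Z) = Φ(X), then m ≥ C₁·n·s·log(C₂·n/s). -/
/-!
The map `Φ` factors through `ℝ^{n×n} ⧸ ker Φ`, a space of dimension at most `m`, normed by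
`‖[X]‖ = inf {‖Z‖₁ : Φ Z = Φ X}`. By hypothesis, `‖[X]‖ = ‖X‖₁` whenever every
column of `X` is `2s`-sparse. Hence a family of matrices with `s`-sparse columns, of norm at
most `1` and mutual distance at least `1`, stays bounded and separated in the quotient, and a volume
argument (`card_le_of_separated_fibers`) bounds its cardinality by `5 ^ m`.

Since `‖·‖₁` is a maximum over the columns, two matrices are already far apart once a single column
is; so if `N` vectors of `ℝ^n` are admissible as columns, then all `N ^ n` matrices with these
columns are admissible. The vectors are normalized indicators of graphs of functions
`Fin s → Fin q`, `q = ⌊n / s⌋`, whose `s * q` possible points are embedded into `Fin n`. Their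
`ℓ₁`-distance is `2 / s` times the Hamming distance, and a Gilbert–Varshamov code (`exists_code`)
has `N ≥ (q / 4) ^ (s / 2)` words at pairwise Hamming distance greater than `⌊s / 2⌋`.
Taking logarithms in `N ^ n ≤ 5 ^ m` gives the claim with `C₁ = 1 / (2 log 5)`, `C₂ = 1 / 8`.
-/

open scoped BigOperators
open scoped Classical

noncomputable section

/-- A point of a Hamming ball is determined by the set of at most `t` positions where it differs from
the centre and its values there. -/
theorem card_hamming_ball_le (s q t : ℕ) (hq : 0 < q) (f : Fin s → Fin q) :
    ((Finset.univ : Finset (Fin s → Fin q)).filter fun g => hammingDist f g ≤ t).card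
      ≤ 2 ^ s * q ^ t := by
  have hsub : ((Finset.univ : Finset (Fin s → Fin q)).filter fun g => hammingDist f g ≤ t) ⊆
      ((Finset.univ : Finset (Finset (Fin s))).filter fun A => A.card ≤ t).biUnion fun A =>
        Fintype.piFinset fun i => if i ∈ A then (Finset.univ : Finset (Fin q)) else {f i} := by
    intro g hg
    simp only [Finset.mem_filter, Finset.mem_univ, true_and] at hg
    simp only [Finset.mem_biUnion, Finset.mem_filter, Finset.mem_univ, true_and]
    refine ⟨Finset.univ.filter fun i => f i ≠ g i, ?_, ?_⟩
    · simpa [hammingDist] using hg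
    · rw [Fintype.mem_piFinset]
      intro i
      by_cases h : f i = g i <;> simp [h]
  refine (Finset.card_le_card hsub).trans (Finset.card_biUnion_le.trans ?_)
  have hb : ∀ A ∈ (Finset.univ : Finset (Finset (Fin s))).filter (fun A => A.card ≤ t),
      (Fintype.piFinset fun i =>
        if i ∈ A then (Finset.univ : Finset (Fin q)) else {f i}).card ≤ q ^ t := by
    intro A hA
    simp only [Finset.mem_filter, Finset.mem_univ, true_and] at hA
    rw [Fintype.card_piFinset]
    have : ∀ i, (if i ∈ A then (Finset.univ : Finset (Fin q)) else {f i}).card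
        = if i ∈ A then q else 1 := by
      intro i; split_ifs <;> simp
    simp only [this]
    rw [Finset.prod_ite_mem, Finset.univ_inter, Finset.prod_const]
    exact Nat.pow_le_pow_right hq hA
  refine (Finset.sum_le_card_nsmul _ _ _ hb).trans ?_
  rw [smul_eq_mul]
  gcongr
  refine (Finset.card_filter_le _ _).trans ?_
  simp

/-- Gilbert–Varshamov: the balls of radius `⌊s / 2⌋` around a maximal code cover the whole space. -/
theorem exists_code (s q : ℕ) (hq : 0 < q) :
    ∃ C : Finset (Fin s → Fin q),
      (∀ f ∈ C, ∀ g ∈ C, f ≠ g → s / 2 < hammingDist f g) ∧ q ^ s ≤ C.card ^ 2 * 4 ^ s := by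
  let P : Finset (Finset (Fin s → Fin q)) := Finset.univ.filter fun C =>
    ∀ f ∈ C, ∀ g ∈ C, f ≠ g → s / 2 < hammingDist f g
  obtain ⟨C, hC, hmax⟩ := Finset.exists_max_image P Finset.card ⟨∅, by simp [P]⟩
  have hsep : ∀ f ∈ C, ∀ g ∈ C, f ≠ g → s / 2 < hammingDist f g := by simpa [P] using hC
  refine ⟨C, hsep, ?_⟩
  have hcov : (Finset.univ : Finset (Fin s → Fin q)) ⊆
      C.biUnion fun f => Finset.univ.filter fun g => hammingDist f g ≤ s / 2 := by
    intro g _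
    by_contra hg
    simp only [Finset.mem_biUnion, Finset.mem_filter, Finset.mem_univ, true_and, not_exists,
      not_and, not_le] at hg
    have hgC : g ∉ C := fun h => by simpa using hg g h
    have := hmax (insert g C) (by
      simp only [P, Finset.mem_filter, Finset.mem_univ, true_and, Finset.mem_insert]
      rintro a (rfl | ha) b (rfl | hb) hab
      · exact absurd rfl hab
      · rw [hammingDist_comm]; exact hg b hb
      · exact hg a ha
      · exact hsep a ha b hb hab)
    rw [Finset.card_insert_of_notMem hgC] at this
    omega
  have h1 : q ^ s ≤ C.card * (2 ^ s * q ^ (s / 2)) := by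
    have := (Finset.card_le_card hcov).trans (Finset.card_biUnion_le.trans
      (Finset.sum_le_card_nsmul _ _ _ fun f _ => card_hamming_ball_le s q (s / 2) hq f))
    simpa using this
  have h2 : q ^ (s / 2) * q ^ (s / 2) ≤ q ^ s := by
    rw [← pow_add]; exact Nat.pow_le_pow_right hq (by omega)
  have h3 : q ^ s * q ^ s ≤ q ^ s * (C.card ^ 2 * 4 ^ s) := by
    calc q ^ s * q ^ s
        ≤ (C.card * (2 ^ s * q ^ (s / 2))) * (C.card * (2 ^ s * q ^ (s / 2))) :=
          Nat.mul_le_mul h1 h1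
      _ = (q ^ (s / 2) * q ^ (s / 2)) * (C.card ^ 2 * (2 * 2) ^ s) := by
          rw [mul_pow]; ring
      _ ≤ q ^ s * (C.card ^ 2 * 4 ^ s) := Nat.mul_le_mul h2 le_rfl
  exact Nat.le_of_mul_le_mul_left h3 (pow_pos hq s)

/-- Points of norm at most `2` whose images under `L : E → ℝ^m` are separated for the quotient norm
number at most `5 ^ m`: the volume bound for separated sets, applied in `E ⧸ ker L`. -/
theorem card_le_of_separated_fibers {E ι : Type*} [NormedAddCommGroup E] [NormedSpace ℝ E]
    [FiniteDimensional ℝ E] [Fintype ι] {m : ℕ} (L : E →ₗ[ℝ] (Fin m → ℝ)) (X : ι → E)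
    (hX : ∀ a, ‖X a‖ ≤ 2)
    (hsep : ∀ a b, a ≠ b → ∀ z, L z = L (X a - X b) → 1 ≤ ‖z‖) :
    Fintype.card ι ≤ 5 ^ m := by
  have : IsClosed ((LinearMap.ker L : Submodule ℝ E) : Set E) :=
    Submodule.closed_of_finiteDimensional _
  let Q := E ⧸ LinearMap.ker L
  let p : ι → Q := fun a => Submodule.Quotient.mk (X a)
  have hp : ∀ a b, a ≠ b → 1 ≤ ‖p a - p b‖ := by
    intro a b hab
    refine QuotientAddGroup.le_norm_iff.2 fun z hz => hsep a b hab z ?_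
    have hz' : (Submodule.Quotient.mk z : Q) = Submodule.Quotient.mk (X a - X b) := hz
    rw [Submodule.Quotient.eq, LinearMap.mem_ker, map_sub, sub_eq_zero] at hz'
    exact hz'
  have hinj : Function.Injective p := by
    intro a b hab
    by_contra hne
    have := hp a b hne
    rw [hab, sub_self, norm_zero] at this
    linarith
  have hcard := Besicovitch.card_le_of_separated (Finset.univ.image p)
    (by
      intro c hc
      obtain ⟨a, -, rfl⟩ := Finset.mem_image.1 hc
      exact (Submodule.Quotient.norm_mk_le _ _).trans (hX a))
    (by
      intro c hc d hd hcd
      obtain ⟨a, -, rfl⟩ := Finset.mem_image.1 hc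
      obtain ⟨b, -, rfl⟩ := Finset.mem_image.1 hd
      exact hp a b fun h => hcd (by rw [h]))
  rw [Finset.card_image_of_injective _ hinj, Finset.card_univ] at hcard
  refine hcard.trans (Nat.pow_le_pow_right (by norm_num) ?_)
  rw [L.quotKerEquivRange.finrank_eq]
  simpa using Submodule.finrank_le (LinearMap.range L)

/-- Matrices as tuples of columns; the sup norm over columns of the `ℓ₁` norm makes the norm of
this space equal to `mnorm1`. -/
abbrev ColSpace (n : ℕ) : Type := Fin n → PiLp 1 (fun _ : Fin n => ℝ)

/-- The matrix with the given columns. -/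
def toMat (n : ℕ) : ColSpace n →ₗ[ℝ] Matrix (Fin n) (Fin n) ℝ where
  toFun x := Matrix.of fun i j => x j i
  map_add' x y := by ext i j; simp
  map_smul' c x := by ext i j; simp

theorem toMat_apply {n : ℕ} (x : ColSpace n) (i j : Fin n) : toMat n x i j = x j i := rfl

theorem toMat_injective (n : ℕ) : Function.Injective (toMat n) := by
  intro x y h
  ext j i
  rw [← toMat_apply, h, toMat_apply]

theorem colNorm1_toMat {n : ℕ} (x : ColSpace n) (j : Fin n) : colNorm1 (toMat n x) j = ‖x j‖ := by
  rw [PiLp.norm_eq_of_L1]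
  rfl

theorem mnorm1_toMat {n : ℕ} (hn : 0 < n) (x : ColSpace n) : mnorm1 (toMat n x) = ‖x‖ := by
  have : Nonempty (Fin n) := ⟨⟨0, hn⟩⟩
  unfold mnorm1
  simp only [colNorm1_toMat]
  apply le_antisymm
  · exact ciSup_le fun j => norm_le_pi_norm x j
  · exact (pi_norm_le_iff_of_nonempty x).2 fun j =>
      le_ciSup (f := fun j => ‖x j‖) (Set.finite_range _).bddAbove j

/-- The graph of `f`, transported into `Fin n` by `e`. -/
def graphSet {n s q : ℕ} (e : Fin s × Fin q ↪ Fin n) (f : Fin s → Fin q) : Finset (Fin n) :=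
  Finset.univ.image fun i => e (i, f i)

/-- The indicator vector of the transported graph of `f`, normalized to `ℓ₁`-norm one. -/
def graphVec {n s q : ℕ} (e : Fin s × Fin q ↪ Fin n) (f : Fin s → Fin q) :
    PiLp 1 (fun _ : Fin n => ℝ) :=
  WithLp.toLp 1 fun r => if r ∈ graphSet e f then (s : ℝ)⁻¹ else 0

theorem graphVec_apply {n s q : ℕ} (e : Fin s × Fin q ↪ Fin n) (f : Fin s → Fin q) (r : Fin n) :
    graphVec e f r = if r ∈ graphSet e f then (s : ℝ)⁻¹ else 0 := rfl

theorem card_graphSet_le {n s q : ℕ} (e : Fin s × Fin q ↪ Fin n) (f : Fin s → Fin q) :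
    (graphSet e f).card ≤ s :=
  Finset.card_image_le.trans (by simp)

theorem norm_graphVec_le {n s q : ℕ} (hs : 0 < s) (e : Fin s × Fin q ↪ Fin n)
    (f : Fin s → Fin q) : ‖graphVec e f‖ ≤ 1 := by
  have hs' : (0 : ℝ) < s := by exact_mod_cast hs
  have hval : ‖graphVec e f‖ = (graphSet e f).card * (s : ℝ)⁻¹ := by
    rw [PiLp.norm_eq_of_L1]
    simp only [graphVec_apply, apply_ite norm, norm_zero, norm_inv, Real.norm_natCast]
    rw [Finset.sum_ite_mem, Finset.univ_inter, Finset.sum_const, nsmul_eq_mul]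
  have hle : ((graphSet e f).card : ℝ) ≤ s := by exact_mod_cast card_graphSet_le e f
  rw [hval, ← div_eq_mul_inv, div_le_one hs']
  exact hle

/-- Each position where `f` and `g` differ yields a point of the graph of `f` off that of `g`. -/
theorem hammingDist_le_card_sdiff {n s q : ℕ} (e : Fin s × Fin q ↪ Fin n)
    (f g : Fin s → Fin q) : hammingDist f g ≤ (graphSet e f \ graphSet e g).card := by
  unfold hammingDist
  refine Finset.card_le_card_of_injOn (fun i => e (i, f i)) ?_ ?_
  · intro i hi
    simp only [Finset.coe_filter, Finset.mem_univ, true_and, Set.mem_ofPred_eq] at hi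
    simp only [Finset.coe_sdiff, Set.mem_sdiff, Finset.mem_coe, graphSet, Finset.mem_image,
      Finset.mem_univ, true_and]
    refine ⟨⟨i, rfl⟩, ?_⟩
    rintro ⟨k, hk⟩
    obtain ⟨rfl, h2⟩ := Prod.mk.inj (e.injective hk)
    exact hi h2.symm
  · intro i _ k _ hik
    exact (Prod.mk.inj (e.injective hik)).1

theorem one_le_norm_graphVec_sub {n s q : ℕ} (hs : 0 < s) (e : Fin s × Fin q ↪ Fin n)
    (f g : Fin s → Fin q) (hfg : s / 2 < hammingDist f g) :
    1 ≤ ‖graphVec e f - graphVec e g‖ := by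
  have hs' : (0 : ℝ) < s := by exact_mod_cast hs
  set A := graphSet e f \ graphSet e g with hA
  set B := graphSet e g \ graphSet e f with hB
  have hcard : s ≤ A.card + B.card := by
    have h1 := hammingDist_le_card_sdiff e f g
    have h2 := hammingDist_le_card_sdiff e g f
    rw [hammingDist_comm, ← hB] at h2
    rw [← hA] at h1
    omega
  have hdisj : Disjoint A B := by
    rw [Finset.disjoint_left]
    intro r h1 h2
    exact (Finset.mem_sdiff.1 h1).2 (Finset.mem_sdiff.1 h2).1
  have hval : ∀ r ∈ A ∪ B, (s : ℝ)⁻¹ ≤ ‖(graphVec e f - graphVec e g) r‖ := by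
    intro r hr
    rw [PiLp.sub_apply, graphVec_apply, graphVec_apply]
    rcases Finset.mem_union.1 hr with h | h <;>
      simp [(Finset.mem_sdiff.1 h).1, (Finset.mem_sdiff.1 h).2]
  rw [PiLp.norm_eq_of_L1]
  calc (1 : ℝ) = s * (s : ℝ)⁻¹ := (mul_inv_cancel₀ hs'.ne').symm
    _ ≤ (A ∪ B).card * (s : ℝ)⁻¹ := by
        rw [Finset.card_union_of_disjoint hdisj]
        have : (s : ℝ) ≤ ((A.card + B.card : ℕ) : ℝ) := by exact_mod_cast hcard
        gcongr
    _ ≤ ∑ r ∈ A ∪ B, ‖(graphVec e f - graphVec e g) r‖ := by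
        rw [← nsmul_eq_mul]
        exact Finset.card_nsmul_le_sum _ _ _ hval
    _ ≤ ∑ r, ‖(graphVec e f - graphVec e g) r‖ :=
        Finset.sum_le_sum_of_subset_of_nonneg (Finset.subset_univ _) fun _ _ _ => norm_nonneg _

/-- The packing bound: placing codewords freely in the `n` columns gives `C.card ^ n` matrices that
are `1`-separated modulo `ker Φ`. -/
theorem card_code_pow_le {n m s q : ℕ} (hs : 0 < s) (hn : 0 < n) (e : Fin s × Fin q ↪ Fin n)
    (Φ : Matrix (Fin n) (Fin n) ℝ →ₗ[ℝ] (Fin m → ℝ))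
    (hΦ : ∀ X : Matrix (Fin n) (Fin n) ℝ, ColSparse (2 * s) X →
      ∀ Z : Matrix (Fin n) (Fin n) ℝ, Φ Z = Φ X → Z ≠ X → mnorm1 X < mnorm1 Z)
    (C : Finset (Fin s → Fin q))
    (hC : ∀ f ∈ C, ∀ g ∈ C, f ≠ g → s / 2 < hammingDist f g) :
    C.card ^ n ≤ 5 ^ m := by
  let X : (Fin n → C) → ColSpace n := fun F j => graphVec e (F j)
  have h := card_le_of_separated_fibers (Φ ∘ₗ toMat n) X
    (by
      intro F
      refine (pi_norm_le_iff_of_nonneg (by norm_num)).2 fun j => ?_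
      exact (norm_graphVec_le hs e _).trans (by norm_num))
    (by
      intro F G hFG z hz
      have hnorm : 1 ≤ ‖X F - X G‖ := by
        obtain ⟨j, hj⟩ := Function.ne_iff.1 hFG
        refine le_trans ?_ (norm_le_pi_norm (X F - X G) j)
        exact one_le_norm_graphVec_sub hs e _ _
          (hC _ (F j).2 _ (G j).2 fun h => hj (Subtype.ext h))
      by_cases hzX : z = X F - X G
      · rw [hzX]; exact hnorm
      have hsparse : ColSparse (2 * s) (toMat n (X F - X G)) := by
        intro j
        have hsub : ((Finset.univ : Finset (Fin n)).filter
            fun i => toMat n (X F - X G) i j ≠ 0) ⊆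
            graphSet e (F j) ∪ graphSet e (G j) := by
          intro i hi
          by_contra hmem
          rw [Finset.mem_union, not_or] at hmem
          refine (Finset.mem_filter.1 hi).2 ?_
          rw [toMat_apply, Pi.sub_apply, PiLp.sub_apply]
          simp only [X, graphVec_apply, hmem.1, hmem.2, if_false, sub_zero]
        have h1 := card_graphSet_le e (F j : Fin s → Fin q)
        have h2 := card_graphSet_le e (G j : Fin s → Fin q)
        have h3 := Finset.card_union_le (graphSet e (F j)) (graphSet e (G j))
        have h4 := Finset.card_le_card hsub
        omega
      have hlt := hΦ _ hsparse (toMat n z) hz fun h => hzX (toMat_injective n h)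
      rw [mnorm1_toMat hn, mnorm1_toMat hn] at hlt
      exact hnorm.trans hlt.le)
  simpa using h

/-- necessary condition on the number of measurements (Theorem 5.3). -/
theorem necessary_number_of_measurements :
    ∃ C₁ C₂ : ℝ, 0 < C₁ ∧ 0 < C₂ ∧
      ∀ n m s : ℕ, 0 < s → s < n →
        ∀ Φ : Matrix (Fin n) (Fin n) ℝ →ₗ[ℝ] (Fin m → ℝ),
          (∀ X : Matrix (Fin n) (Fin n) ℝ, ColSparse (2 * s) X →
            ∀ Z : Matrix (Fin n) (Fin n) ℝ, Φ Z = Φ X → Z ≠ X → mnorm1 X < mnorm1 Z) →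
          (m : ℝ) ≥ C₁ * n * s * Real.log (C₂ * n / s) := by
  refine ⟨1 / (2 * Real.log 5), 1 / 8, ?_, by norm_num, ?_⟩
  · have : 0 < Real.log 5 := Real.log_pos (by norm_num)
    positivity
  intro n m s hs hsn Φ hΦ
  have hn : 0 < n := hs.trans hsn
  set q := n / s with hq
  have hq1 : 0 < q := Nat.div_pos hsn.le hs
  have hsq : s * q ≤ n := Nat.mul_div_le n s
  have hn2 : n ≤ 2 * s * q := by
    have h1 : n < s * (q + 1) := Nat.lt_mul_div_succ n hs
    nlinarith
  let e : Fin s × Fin q ↪ Fin n :=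
    finProdFinEquiv.toEmbedding.trans (Fin.castLEEmb hsq)
  obtain ⟨C, hC, hcard⟩ := exists_code s q hq1
  have hpack := card_code_pow_le hs hn e Φ hΦ C hC
  have hN : 0 < C.card := by
    rcases Nat.eq_zero_or_pos C.card with h | h
    · rw [h] at hcard
      have := pow_pos hq1 s
      simp at hcard
      omega
    · exact h
  have hsR : (0 : ℝ) < s := by exact_mod_cast hs
  have hnR : (0 : ℝ) < n := by exact_mod_cast hn
  have hqR : (0 : ℝ) < q := by exact_mod_cast hq1
  have hNR : (0 : ℝ) < C.card := by exact_mod_cast hN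
  have h5 : 0 < Real.log 5 := Real.log_pos (by norm_num)
  have hlog1 : n * Real.log C.card ≤ m * Real.log 5 := by
    have h : ((C.card : ℝ)) ^ n ≤ 5 ^ m := by exact_mod_cast hpack
    have := Real.log_le_log (by positivity) h
    rwa [Real.log_pow, Real.log_pow] at this
  have hlog2 : s * Real.log q ≤ 2 * Real.log C.card + s * Real.log 4 := by
    have h : (q : ℝ) ^ s ≤ (C.card : ℝ) ^ 2 * 4 ^ s := by exact_mod_cast hcard
    have := Real.log_le_log (by positivity) h
    rw [Real.log_mul (by positivity) (by positivity), Real.log_pow, Real.log_pow,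
      Real.log_pow] at this
    exact_mod_cast this
  have hlog3 : Real.log (1 / 8 * n / s) ≤ Real.log q - Real.log 4 := by
    rw [← Real.log_div hqR.ne' (by norm_num)]
    apply Real.log_le_log (by positivity)
    rw [div_le_iff₀ hsR]
    have : (n : ℝ) ≤ 2 * s * q := by exact_mod_cast hn2
    linarith
  have hmain : n * (s * Real.log (1 / 8 * n / s)) ≤ m * (2 * Real.log 5) := by
    have h1 : s * Real.log (1 / 8 * n / s) ≤ 2 * Real.log C.card := by
      have := mul_le_mul_of_nonneg_left hlog3 hsR.le
      linarith
    have h2 := mul_le_mul_of_nonneg_left h1 hnR.le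
    linarith
  have heq : 1 / (2 * Real.log 5) * n * s * Real.log (1 / 8 * n / s)
      = n * (s * Real.log (1 / 8 * n / s)) / (2 * Real.log 5) := by
    field_simp
  rw [ge_iff_le, heq, div_le_iff₀ (by positivity)]
  exact hmain

end
end
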